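/- arXiv:1609.03694 — 7 statements merged into one kernel-verified Lean document; each statement's English description precedes it below -/
import Mathlib

section
/- Let n ≥ 2 be an integer and p an odd prime with p ≥ 2n−5. If a is an integer such that p divides a, or such that a is not a square modulo p, then Kl_{p^n}(a,1) = 0, i.e. Σ_{1 ≤ x ≤ p^n, p ∤ x} e((a x + x̄)/p^n) = 0. -/
open scoped BigOperators
open Filter MeasureTheory

noncomputable section

/-- `e(z) = exp(2πiz)`. -/
def eC (z : ℝ) : ℂ := Complex.exp (2 * Real.pi * Complex.I * z)

/-- The additive character `x ↦ e(x/q)` on `ZMod q`. -/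
def eMod (q : ℕ) (x : ZMod q) : ℂ := eC ((x.val : ℝ) / q)

/-- Partial normalized Kloosterman sum
`p^{-n/2} ∑_{1 ≤ x ≤ j, p ∤ x} e((a x + b x̄)/p^n)`. -/
def klPartial (p n : ℕ) (j : ℕ) (a b : ZMod (p ^ n)) : ℂ :=
  (Real.sqrt ((p : ℝ) ^ n))⁻¹ *
    ∑ x ∈ (Finset.Icc 1 j).filter (fun x => ¬ p ∣ x),
      eMod (p ^ n) (a * (x : ZMod (p ^ n)) + b * (x : ZMod (p ^ n))⁻¹)

/-- The complete normalized Kloosterman sum `Kl_{p^n}(a,b)`. -/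
def klFull (p n : ℕ) (a b : ZMod (p ^ n)) : ℂ := klPartial p n (p ^ n) a b

/-- The `i`-th element (1-indexed) of `J_p^n = {1 ≤ j ≤ p^n : p ∤ j}`. -/
def jIdx (p i : ℕ) : ℕ := i + (i - 1) / (p - 1)

/-- The parametrized Kloosterman path `t ↦ Kl_{p^n}(t;(a,b))`. -/
def klPath (p n : ℕ) (a b : ZMod (p ^ n)) (t : ℝ) : ℂ :=
  let m : ℕ := (p ^ n).totient - 1
  let i : ℕ := max 1 (Int.toNat ⌈(m : ℝ) * t⌉)
  klPartial p n (jIdx p i) a b +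
    ((((m : ℝ) * t - ((i : ℝ) - 1) : ℝ)) : ℂ) *
      (klPartial p n (jIdx p (i + 1)) a b - klPartial p n (jIdx p i) a b)

/-- `x_k(t) = φ(p^n) t + k - 1`, where `k = ⌈p^{n-1} t⌉` is determined by
`t ∈ ((k-1)/p^{n-1}, k/p^{n-1}]`. -/
def xkf (p n : ℕ) (t : ℝ) : ℝ :=
  ((p ^ n).totient : ℝ) * t + ((⌈(p : ℝ) ^ (n - 1) * t⌉ : ℤ) : ℝ) - 1

/-- The discrete Fourier coefficient `α_{p^n}(h;t) = p^{-n/2} ∑_{1 ≤ x ≤ x_k(t)} e(hx/p^n)`. -/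
def alphaF (p n : ℕ) (h : ℤ) (t : ℝ) : ℂ :=
  (Real.sqrt ((p : ℝ) ^ n))⁻¹ *
    ∑ x ∈ Finset.Icc 1 (⌊xkf p n t⌋.toNat), eC ((h : ℝ) * (x : ℝ) / (p : ℝ) ^ n)

/-- `β(h;t)`: `t` for `h = 0` and `(e(ht)-1)/(2πih)` otherwise. -/
def betaF (h : ℤ) (t : ℝ) : ℂ :=
  if h = 0 then (t : ℂ) else (eC ((h : ℝ) * t) - 1) / (2 * Real.pi * Complex.I * h)

/-- The completed step path `K̃l_{p^n}(t;(a,b))`. -/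
def klStep (p n : ℕ) (a b : ZMod (p ^ n)) (t : ℝ) : ℂ :=
  klPartial p n (⌊xkf p n t⌋.toNat) a b

/-- The measure `μ = (1/2)δ₀ + μ₁` where `dμ₁ = (2π√(4-x²))⁻¹ 1_{(-2,2)} dx`. -/
def muKl : Measure ℝ :=
  (1 / 2 : ENNReal) • Measure.dirac (0 : ℝ) +
    volume.withDensity (fun x =>
      ENNReal.ofReal
        (Set.indicator (Set.Ioo (-2 : ℝ) 2)
          (fun y => 1 / (2 * Real.pi * Real.sqrt (4 - y ^ 2))) x))


/-- `eMod` is the standard additive character of `ZMod q`. -/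
lemma eMod_eq_stdAddChar (q : ℕ) [NeZero q] (x : ZMod q) : eMod q x = ZMod.stdAddChar x := by
  rw [ZMod.stdAddChar_apply, ZMod.toCircle_apply, eMod, eC]
  congr 1
  push_cast
  ring

/-- A sum over the integers of `[1, p ^ n]` prime to `p` is a sum over the units mod `p ^ n`. -/
lemma sum_not_dvd_eq_sum_units {M : Type*} [AddCommMonoid M] {p n : ℕ} (hp : p.Prime)
    (hn : n ≠ 0) [NeZero (p ^ n)] (f : ZMod (p ^ n) → M) :
    ∑ x ∈ (Finset.Icc 1 (p ^ n)).filter (fun x => ¬ p ∣ x), f (x : ZMod (p ^ n)) =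
      ∑ u : (ZMod (p ^ n))ˣ, f u := by
  symm
  refine Finset.sum_bij (fun u _ => (u : ZMod (p ^ n)).val) ?_ ?_ ?_ ?_
  · intro u _
    have hndvd : ¬ p ∣ (u : ZMod (p ^ n)).val := by
      rw [← hp.coprime_iff_not_dvd]
      exact ((ZMod.val_coe_unit_coprime u).coprime_dvd_right (dvd_pow_self p hn)).symm
    rw [Finset.mem_filter, Finset.mem_Icc]
    refine ⟨⟨Nat.one_le_iff_ne_zero.2 fun h => hndvd (h ▸ dvd_zero p), ?_⟩, hndvd⟩
    exact (ZMod.val_lt _).le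
  · intro u _ v _ h
    exact Units.ext (ZMod.val_injective _ h)
  · intro x hx
    rw [Finset.mem_filter, Finset.mem_Icc] at hx
    have hlt : x < p ^ n :=
      lt_of_le_of_ne hx.1.2 fun h => hx.2 (h ▸ dvd_pow_self p hn)
    have hcop : x.Coprime (p ^ n) :=
      (((hp.coprime_iff_not_dvd).2 hx.2).symm).pow_right n
    exact ⟨ZMod.unitOfCoprime x hcop, Finset.mem_univ _, by
      rw [ZMod.coe_unitOfCoprime, ZMod.val_cast_of_lt hlt]⟩
  · intro u _
    rw [ZMod.natCast_zmod_val]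

/-- An element of `ZMod (p ^ n)` with nonzero reduction mod `p` is a unit. -/
lemma isUnit_of_castHom_ne_zero {p n : ℕ} (hp : p.Prime) [NeZero (p ^ n)] (h : p ∣ p ^ n)
    {c : ZMod (p ^ n)} (hc : ZMod.castHom h (ZMod p) c ≠ 0) : IsUnit c := by
  rw [← ZMod.natCast_zmod_val c] at hc ⊢
  rw [map_natCast, Ne, ZMod.natCast_eq_zero_iff] at hc
  rw [ZMod.isUnit_iff_coprime]
  exact (((hp.coprime_iff_not_dvd).2 hc).symm).pow_right n

/-- Summing an additive character over the first `p` multiples of a nontrivial `p`-torsion point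
gives zero. -/
lemma sum_range_stdAddChar_nsmul {q : ℕ} [NeZero q] (p : ℕ) {y : ZMod q} (hy : y ≠ 0)
    (hpy : (p : ZMod q) * y = 0) :
    ∑ t ∈ Finset.range p, ZMod.stdAddChar ((t : ZMod q) * y) = 0 := by
  have hne : ZMod.stdAddChar y ≠ 1 := fun h =>
    hy (ZMod.injective_stdAddChar (h.trans (AddChar.map_zero_eq_one _).symm))
  simp_rw [← nsmul_eq_mul, AddChar.map_nsmul_eq_pow]
  rw [geom_sum_eq hne, ← AddChar.map_nsmul_eq_pow, nsmul_eq_mul, hpy,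
    AddChar.map_zero_eq_one, sub_self, zero_div]

/-- Stationary phase: if `a u - u⁻¹` is a unit for every unit `u`, and `ε ≠ 0` satisfies
`ε ^ 2 = 0` and `m ε = 0` with `m ≠ 0`, then the Kloosterman sum over units vanishes. -/
lemma sum_units_stdAddChar_eq_zero {q m : ℕ} [NeZero q] (hm : m ≠ 0) {a ε : ZMod q} (hε : ε ≠ 0)
    (hsq : ε * ε = 0) (hmε : (m : ZMod q) * ε = 0)
    (hunit : ∀ u : (ZMod q)ˣ, IsUnit (a * u - (u⁻¹ : (ZMod q)ˣ))) :
    ∑ u : (ZMod q)ˣ, ZMod.stdAddChar (N := q) (a * u + (u⁻¹ : (ZMod q)ˣ)) = 0 := by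
  have hshift (t : ℕ) :
      ∑ u : (ZMod q)ˣ, ZMod.stdAddChar (N := q) (a * u + (u⁻¹ : (ZMod q)ˣ)) =
        ∑ u : (ZMod q)ˣ, ZMod.stdAddChar (N := q) (a * u + (u⁻¹ : (ZMod q)ˣ)) *
          ZMod.stdAddChar (N := q) (t * (ε * (a * u - (u⁻¹ : (ZMod q)ˣ)))) := by
    let w : (ZMod q)ˣ := ⟨1 + t * ε, 1 - t * ε,
      by linear_combination -(t : ZMod q) ^ 2 * hsq, by linear_combination -(t : ZMod q) ^ 2 * hsq⟩
    rw [← Equiv.sum_comp (Equiv.mulRight w)]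
    refine Finset.sum_congr rfl fun u _ => ?_
    rw [← AddChar.map_add_eq_mul]
    congr 1
    have hw : (w : ZMod q) = 1 + t * ε := rfl
    have hw' : ((w⁻¹ : (ZMod q)ˣ) : ZMod q) = 1 - t * ε := rfl
    rw [Equiv.coe_mulRight, mul_inv, Units.val_mul, Units.val_mul, hw, hw']
    ring
  have hsum : (m : ℂ) * ∑ u : (ZMod q)ˣ, ZMod.stdAddChar (N := q) (a * u + (u⁻¹ : (ZMod q)ˣ)) = 0 := by
    rw [← nsmul_eq_mul, ← Finset.card_range m, ← Finset.sum_const,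
      Finset.sum_congr rfl fun t _ => hshift t, Finset.sum_comm]
    refine Finset.sum_eq_zero fun u _ => ?_
    rw [← Finset.mul_sum, sum_range_stdAddChar_nsmul, mul_zero]
    · rwa [Ne, (hunit u).mul_left_eq_zero]
    · rw [← mul_assoc, hmε, zero_mul]
  exact (mul_eq_zero.1 hsum).resolve_left (Nat.cast_ne_zero.2 hm)

/-- Let `n ≥ 2` and let `p` be an odd prime with `p ≥ 2n - 5`.
If `p ∣ a`, or `a` is not a square modulo `p`, then the Kloosterman sum
`∑_{1 ≤ x ≤ p^n, p ∤ x} e((ax + x̄)/p^n)` vanishes. -/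
theorem kloosterman_vanishes (n : ℕ) (hn : 2 ≤ n) (p : ℕ) (hp : p.Prime) (hodd : Odd p)
    (hsize : 2 * n - 5 ≤ p) (a : ℤ)
    (ha : (p : ℤ) ∣ a ∨ ¬ ∃ y : ZMod p, y ^ 2 = (a : ZMod p)) :
    ∑ x ∈ (Finset.Icc 1 (p ^ n)).filter (fun x => ¬ p ∣ x),
        eMod (p ^ n) ((a : ZMod (p ^ n)) * (x : ZMod (p ^ n)) + ((x : ZMod (p ^ n)))⁻¹) = 0 := by
  have hn0 : n ≠ 0 := by lia
  have : NeZero (p ^ n) := ⟨pow_ne_zero n hp.ne_zero⟩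
  have : Fact p.Prime := ⟨hp⟩
  have hdvd : p ∣ p ^ n := dvd_pow_self p hn0
  have hzero : ∀ k, n ≤ k → (p : ZMod (p ^ n)) ^ k = 0 := fun k hk => by
    exact_mod_cast (ZMod.natCast_eq_zero_iff (p ^ k) (p ^ n)).2 (pow_dvd_pow p hk)
  rw [sum_not_dvd_eq_sum_units hp hn0
    (fun x => eMod (p ^ n) ((a : ZMod (p ^ n)) * x + x⁻¹))]
  simp_rw [eMod_eq_stdAddChar, ZMod.inv_coe_unit]
  refine sum_units_stdAddChar_eq_zero (m := p) (ε := (p : ZMod (p ^ n)) ^ (n - 1))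
    hp.ne_zero ?_ ?_ ?_ ?_
  · intro h
    have hle : p ^ n ∣ p ^ (n - 1) :=
      (ZMod.natCast_eq_zero_iff _ _).1 (by exact_mod_cast h)
    have := (Nat.pow_dvd_pow_iff_le_right hp.one_lt).1 hle
    lia
  · rw [← pow_add]
    exact hzero _ (by lia)
  · rw [← pow_succ']
    exact hzero _ (by lia)
  · intro u
    refine isUnit_of_castHom_ne_zero hp hdvd fun h => ?_
    set r := ZMod.castHom hdvd (ZMod p)
    have hinv : r u * r (u⁻¹ : (ZMod (p ^ n))ˣ) = 1 := by
      rw [← map_mul, Units.mul_inv, map_one]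
    rw [map_sub, map_mul, map_intCast] at h
    have hsquare : r (u⁻¹ : (ZMod (p ^ n))ˣ) ^ 2 = (a : ZMod p) := by
      linear_combination (-r (u⁻¹ : (ZMod (p ^ n))ˣ)) * h + (a : ZMod p) * hinv
    rcases ha with ha | ha
    · rw [(ZMod.intCast_zmod_eq_zero_iff_dvd a p).2 ha] at hsquare
      rw [pow_eq_zero_iff two_ne_zero |>.1 hsquare, mul_zero] at hinv
      exact zero_ne_one hinv
    · exact ha ⟨_, hsquare⟩

end
end

section
/- Let n ≥ 2 be an integer and p an odd prime with p ≥ 2n−5. If a is an integer that is a nonzero square modulo p, then for any integer s with s² ≡ a (mod p^n) one has Kl_{p^n}(a,1) = 2·(s/p^n)·cos(4πs/p^n + θ_{p^n}), where (s/p^n) is the Jacobi symbol (equivalently, the n-th power of the Legendre symbol of s modulo p), θ_{p^n} = 0 if n is even or p ≡ 1 (mod 4), and θ_{p^n} = π/2 if n is odd and p ≡ 3 (mod 4); in particular the right-hand side is independent of the choice of such s. -/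
open scoped BigOperators
open Filter MeasureTheory

noncomputable section

section EulerOperator

open Polynomial

/-- The Euler operator sending a polynomial to `X` times its derivative. -/
def eulerOp (R : Type*) [CommRing R] : Module.End R R[X] :=
  LinearMap.mulLeft R X ∘ₗ derivative

variable {R : Type*} [CommRing R]

lemma eulerOp_apply (f : R[X]) : eulerOp R f = X * derivative f := rfl

lemma eulerOp_pow_X_pow (i k : ℕ) : (eulerOp R ^ i) (X ^ k) = (k : R) ^ i • X ^ k := by
  induction i with
  | zero => simp
  | succ i ih =>
    rw [pow_succ', Module.End.mul_apply, ih, map_smul, eulerOp_apply, derivative_X_pow, pow_succ,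
      mul_smul]
    congr 1
    rcases k with _ | k
    · simp
    · simp only [Nat.add_sub_cancel, smul_eq_C_mul]
      ring

lemma eval_one_eulerOp_pow_X_sub_one_pow_mul (m : ℕ) (f : R[X]) :
    eval 1 ((eulerOp R ^ m) ((X - 1) ^ m * f)) = m.factorial * eval 1 f := by
  induction m generalizing f with
  | zero => simp
  | succ m ih =>
    have h : eulerOp R ((X - 1) ^ (m + 1) * f) =
        (X - 1) ^ m * (((m : R[X]) + 1) * X * f + (X - 1) * X * derivative f) := by
      rw [eulerOp_apply, derivative_mul, derivative_pow]
      simp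
      ring
    rw [pow_succ, Module.End.mul_apply, h, ih, Nat.factorial_succ]
    simp
    ring

lemma X_pow_sub_X_pow_eq_X_sub_one_mul (i j : ℕ) :
    ∃ g : R[X], X ^ i - X ^ j = (X - 1) * g ∧ eval 1 g = (i : R) - j := by
  refine ⟨(∑ k ∈ Finset.range i, X ^ k) - ∑ k ∈ Finset.range j, X ^ k, ?_, ?_⟩
  · rw [mul_sub, mul_geom_sum, mul_geom_sum]
    ring
  · simp [eval_finsetSum]

end EulerOperator

section QuadraticGaussSum

open Polynomial

lemma sum_addChar_mul_sq {F : Type*} [Field F] [Fintype F] [DecidableEq F] (hF : ringChar F ≠ 2)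
    {ψ : AddChar F ℂ} (hψ : ψ.IsPrimitive) {c : F} (hc : c ≠ 0) :
    ∑ x : F, ψ (c * x ^ 2) = quadraticChar F c *
      gaussSum ((quadraticChar F).ringHomComp (Int.castRingHom ℂ)) ψ := by
  have h1 : ∑ x : F, ψ (c * x ^ 2) = ∑ y : F, ((quadraticChar F y : ℂ) + 1) * ψ (c * y) := by
    rw [← Finset.sum_fiberwise_of_maps_to (s := Finset.univ) (t := Finset.univ)
      (g := fun x : F => x ^ 2) (fun _ _ => Finset.mem_univ _)]
    refine Finset.sum_congr rfl fun y _ => ?_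
    have h2 := quadraticChar_card_sqrts hF y
    have h3 : ({x : F | x ^ 2 = y}.toFinset) = Finset.univ.filter (fun x : F => x ^ 2 = y) := by
      ext; simp
    rw [h3] at h2
    have h4 : ((Finset.univ.filter (fun x : F => x ^ 2 = y)).card : ℂ) = quadraticChar F y + 1 := by
      exact_mod_cast h2
    rw [← h4, ← nsmul_eq_mul, ← Finset.sum_const]
    refine Finset.sum_congr rfl fun x hx => ?_
    rw [(Finset.mem_filter.1 hx).2]
  have h5 : ∑ y : F, ψ (c * y) = 0 := by
    simp_rw [mul_comm c]
    rw [AddChar.sum_mulShift _ hψ, if_neg hc]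
    simp
  rw [h1]
  simp_rw [add_mul, one_mul]
  rw [Finset.sum_add_distrib, h5, add_zero, gaussSum, Finset.mul_sum]
  refine Fintype.sum_equiv (Equiv.mulLeft₀ c hc) _ _ fun y => ?_
  have h6 : (quadraticChar F c : ℂ) * quadraticChar F c = 1 := by
    have := quadraticChar_sq_one hc
    rw [sq] at this
    exact_mod_cast this
  simp only [Equiv.mulLeft₀_apply, MulChar.ringHomComp_apply, map_mul, eq_intCast]
  linear_combination (-(quadraticChar F y : ℂ) * ψ (c * y)) * h6

lemma ringChar_zmod_ne_two {m : ℕ} : ringChar (ZMod (2 * m + 1)) ≠ 2 := by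
  rw [ZMod.ringChar_zmod_n]
  omega

lemma sum_addChar_sq_sq {m : ℕ} [Fact (2 * m + 1).Prime] {ψ : AddChar (ZMod (2 * m + 1)) ℂ}
    (hψ : ψ.IsPrimitive) :
    (∑ x : ZMod (2 * m + 1), ψ (x ^ 2)) ^ 2 = (-1) ^ m * ((2 * m + 1 : ℕ) : ℂ) := by
  have hF := ringChar_zmod_ne_two (m := m)
  have h := sum_addChar_mul_sq hF hψ one_ne_zero
  simp only [one_mul, map_one, Int.cast_one] at h
  rw [h, gaussSum_sq _ _ hψ, ZMod.card]
  · congr 1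
    rw [MulChar.ringHomComp_apply, quadraticChar_neg_one hF, ZMod.card,
      ZMod.χ₄_eq_neg_one_pow (by omega)]
    rw [show (2 * m + 1) / 2 = m by omega]
    simp
  · obtain ⟨a, ha⟩ := quadraticChar_exists_neg_one' hF
    intro h1
    have := DFunLike.congr_fun h1 (a : ZMod (2 * m + 1))
    rw [MulChar.ringHomComp_apply, ha, MulChar.one_apply_coe] at this
    norm_num at this
  · exact (quadraticChar_isQuadratic _).comp _

lemma prod_pow_sub_pow_sq {m : ℕ} {w : ℂ} (hw : IsPrimitiveRoot w (2 * m + 1)) :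
    (∏ k ∈ Finset.range m, (w ^ (k + 1) - w ^ (2 * m - k))) ^ 2 =
      (-1) ^ m * ((2 * m + 1 : ℕ) : ℂ) := by
  have h2 : IsPrimitiveRoot (w ^ 2) (2 * m + 1) :=
    hw.pow_of_coprime 2 (by simp)
  have h := h2.prod_one_sub_pow_eq_order
  rw [two_mul, Finset.prod_range_add, ← Finset.prod_range_reflect (fun x => 1 - (w ^ 2) ^ (m + x + 1)),
    ← Finset.prod_mul_distrib, ← two_mul] at h
  rw [← Finset.prod_pow]
  push_cast
  push_cast at h
  rw [← h, ← Finset.card_range m, ← Finset.prod_const, Finset.card_range, ← Finset.prod_mul_distrib]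
  refine Finset.prod_congr rfl fun k hk => ?_
  have hk' := Finset.mem_range.1 hk
  have e1 : w ^ (k + 1) * w ^ (2 * m - k) = 1 := by
    rw [← pow_add, show k + 1 + (2 * m - k) = 2 * m + 1 by omega, hw.pow_eq_one]
  rw [show m + (m - 1 - k) + 1 = 2 * m - k by omega, ← pow_mul, ← pow_mul, mul_comm 2 (k + 1),
    mul_comm 2 (2 * m - k), pow_mul, pow_mul]
  generalize w ^ (2 * m - k) = v at e1 ⊢
  linear_combination (w ^ (k + 1) * v - 1) * e1

lemma factorial_sq_zmod {m : ℕ} [Fact (2 * m + 1).Prime] :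
    ((m.factorial : ZMod (2 * m + 1))) ^ 2 = (-1) ^ (m + 1) := by
  have h := ZMod.wilsons_lemma (2 * m + 1)
  have h1 := ZMod.cast_descFactorial (n := m) (p := 2 * m + 1) (by omega)
  have h2 := Nat.factorial_mul_descFactorial (n := 2 * m) (k := m) (by omega)
  rw [show 2 * m - m = m by omega] at h2
  rw [Nat.add_sub_cancel] at h h1
  rw [← h2, Nat.cast_mul, h1] at h
  have h3 : ((-1 : ZMod (2 * m + 1)) ^ m) * (-1) ^ m = 1 := by
    rw [← mul_pow]; simp
  linear_combination (-1 : ZMod (2 * m + 1)) ^ m * h - (m.factorial : ZMod (2 * m + 1)) ^ 2 * h3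

lemma sum_pow_card_sub_one_zmod {m : ℕ} [Fact (2 * m + 1).Prime] :
    ∑ t ∈ Finset.range (2 * m + 1), (t : ZMod (2 * m + 1)) ^ (2 * m) = -1 := by
  have hm : m ≠ 0 := by
    rintro rfl
    exact Nat.not_prime_one (Fact.out : (2 * 0 + 1).Prime)
  rw [Finset.sum_range_succ']
  have h : ∀ t ∈ Finset.range (2 * m), ((t + 1 : ℕ) : ZMod (2 * m + 1)) ^ (2 * m) = 1 := by
    intro t ht
    have := Finset.mem_range.1 ht
    refine ZMod.pow_card_sub_one_eq_one (p := 2 * m + 1) ?_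
    rw [Ne, ZMod.natCast_eq_zero_iff]
    exact fun h => absurd (Nat.le_of_dvd (by omega) h) (by omega)
  rw [Finset.sum_congr rfl h]
  have h0 : ((2 * m + 1 : ℕ) : ZMod (2 * m + 1)) = 0 := ZMod.natCast_self _
  push_cast at h0
  simp [hm]
  linear_combination h0

/-- If the quadratic Gauss sum equals `ε` times the Gauss product for an integer `ε`, then
`ε ≡ (-1) ^ m` modulo `p = 2 * m + 1`. -/
lemma intCast_eq_of_sum_eq_mul_prod {m : ℕ} [Fact (2 * m + 1).Prime] {w : ℂ}
    (hw : IsPrimitiveRoot w (2 * m + 1)) {ε : ℤ}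
    (h : ∑ t ∈ Finset.range (2 * m + 1), w ^ (2 * t ^ 2) =
      ε * ∏ k ∈ Finset.range m, (w ^ (k + 1) - w ^ (2 * m - k))) :
    (ε : ZMod (2 * m + 1)) = (-1) ^ m := by
  have hm : m ≠ 0 := by
    rintro rfl
    exact Nat.not_prime_one (Fact.out : (2 * 0 + 1).Prime)
  have hdvd : cyclotomic (2 * m + 1) ℤ ∣ ∑ t ∈ Finset.range (2 * m + 1), X ^ (2 * t ^ 2) -
      C ε * ∏ k ∈ Finset.range m, (X ^ (k + 1) - X ^ (2 * m - k)) := by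
    rw [cyclotomic_eq_minpoly hw (by omega)]
    refine minpoly.isIntegrallyClosed_dvd (hw.isIntegral (by omega)) ?_
    simp [h, map_prod]
  have hdvd' := Polynomial.map_dvd (Int.castRingHom (ZMod (2 * m + 1))) hdvd
  have hc := cyclotomic_mul_prime_eq_pow_of_not_dvd (ZMod (2 * m + 1)) (p := 2 * m + 1) (n := 1)
    (by simp; omega)
  rw [one_mul, cyclotomic_one, Nat.add_sub_cancel] at hc
  rw [map_cyclotomic, hc] at hdvd'
  obtain ⟨f, hf⟩ := hdvd'
  simp only [Polynomial.map_sub, Polynomial.map_sum, Polynomial.map_mul, Polynomial.map_pow,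
    Polynomial.map_prod, Polynomial.map_X, Polynomial.map_C] at hf
  choose g hg hg1 using fun k : ℕ =>
    X_pow_sub_X_pow_eq_X_sub_one_mul (R := ZMod (2 * m + 1)) (k + 1) (2 * m - k)
  simp_rw [hg, Finset.prod_mul_distrib] at hf
  rw [Finset.prod_const, Finset.card_range, ← smul_eq_C_mul] at hf
  have key := congr_arg (fun P => eval 1 ((eulerOp (ZMod (2 * m + 1)) ^ m) P)) hf
  simp only [map_sub, map_sum, map_smul, eulerOp_pow_X_pow, eval_sub, eval_finsetSum, eval_smul] at key
  have hpow : (X - 1 : (ZMod (2 * m + 1))[X]) ^ (2 * m) = (X - 1) ^ m * (X - 1) ^ m := by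
    rw [← pow_add, ← two_mul]
  rw [hpow, mul_assoc, eval_one_eulerOp_pow_X_sub_one_pow_mul,
    eval_one_eulerOp_pow_X_sub_one_pow_mul, eval_prod] at key
  have h0 : (2 * (m : ZMod (2 * m + 1)) + 1) = 0 := by
    exact_mod_cast ZMod.natCast_self (2 * m + 1)
  have hprod : ∏ k ∈ Finset.range m, eval 1 (g k) = 2 ^ m * (m.factorial : ZMod (2 * m + 1)) := by
    have hconst : ∏ _k ∈ Finset.range m, (2 : ZMod (2 * m + 1)) = 2 ^ m := by simp
    rw [← Finset.prod_range_add_one_eq_factorial, Nat.cast_prod, ← hconst,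
      ← Finset.prod_mul_distrib]
    refine Finset.prod_congr rfl fun k hk => ?_
    have hk' := Finset.mem_range.1 hk
    rw [hg1, Nat.cast_sub (by omega)]
    push_cast
    linear_combination -h0
  have hsum : ∑ t ∈ Finset.range (2 * m + 1), ((2 * t ^ 2 : ℕ) : ZMod (2 * m + 1)) ^ m •
      eval 1 (X ^ (2 * t ^ 2) : (ZMod (2 * m + 1))[X]) = -2 ^ m := by
    have h1 : ∀ t ∈ Finset.range (2 * m + 1), ((2 * t ^ 2 : ℕ) : ZMod (2 * m + 1)) ^ m •
      eval 1 (X ^ (2 * t ^ 2) : (ZMod (2 * m + 1))[X]) = 2 ^ m * (t : ZMod (2 * m + 1)) ^ (2 * m) := by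
      intro t _
      simp [mul_pow, ← pow_mul]
    rw [Finset.sum_congr rfl h1, ← Finset.mul_sum, sum_pow_card_sub_one_zmod]
    ring
  have htwo : (2 : ZMod (2 * m + 1)) ^ m ≠ 0 := by
    refine pow_ne_zero _ fun h2 => one_ne_zero (α := ZMod (2 * m + 1)) ?_
    linear_combination h0 - (m : ZMod (2 * m + 1)) * h2
  have hsgn : ((-1 : ZMod (2 * m + 1)) ^ m) * (-1) ^ m = 1 := by
    rw [← mul_pow]; simp
  have hfac := factorial_sq_zmod (m := m)
  rw [hsum, hprod] at key
  simp only [smul_eq_mul, eq_intCast, eval_mul, eval_pow, eval_sub, eval_X, eval_one, sub_self,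
    zero_pow hm, zero_mul, mul_zero] at key
  refine mul_left_cancel₀ htwo ?_
  linear_combination (-1) ^ m * key + (-1) ^ m * ε * 2 ^ m * hfac - ε * 2 ^ m * hsgn

lemma neg_one_pow_mul_prod_neg_one_pow_mul_I (m : ℕ) :
    (-1 : ℂ) ^ m * ∏ k ∈ Finset.range m, ((-1) ^ (k + 1) * Complex.I) =
      if Even m then 1 else Complex.I := by
  induction m with
  | zero => simp
  | succ m ih =>
    rw [Finset.prod_range_succ, show ∀ P : ℂ, (-1 : ℂ) ^ (m + 1) * (P * ((-1) ^ (m + 1) * Complex.I)) =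
      ((-1) ^ m * P) * ((-1) ^ m * Complex.I) by intro P; ring, ih]
    rcases Nat.even_or_odd m with h | h
    · simp [h, Nat.even_add_one]
    · simp [h, h.neg_one_pow, Nat.not_even_iff_odd.2 h]

lemma stdAddChar_pow_sub_pow {m k : ℕ} (hk : k < m) :
    (ZMod.stdAddChar ((m + 1 : ℕ) : ZMod (2 * m + 1)) : ℂ) ^ (k + 1) -
      (ZMod.stdAddChar ((m + 1 : ℕ) : ZMod (2 * m + 1)) : ℂ) ^ (2 * m - k) =
      ((-1) ^ (k + 1) * Complex.I) *
        ((2 * Real.sin (Real.pi * (k + 1) / (2 * m + 1)) : ℝ) : ℂ) := by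
  have hne : (2 * (m : ℂ) + 1) ≠ 0 := by exact_mod_cast (by omega : 2 * m + 1 ≠ 0)
  set α : ℝ := Real.pi * (k + 1) / (2 * m + 1) with hα
  have e1 : (ZMod.stdAddChar ((m + 1 : ℕ) : ZMod (2 * m + 1)) : ℂ) ^ (k + 1) =
      (-1) ^ (k + 1) * Complex.exp (α * Complex.I) := by
    rw [ZMod.stdAddChar_apply, ZMod.toCircle_natCast, ← Complex.exp_nat_mul, ← Complex.exp_pi_mul_I,
      ← Complex.exp_nat_mul, ← Complex.exp_add]
    congr 1
    rw [hα]
    push_cast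
    field_simp
    ring
  have e2 : (ZMod.stdAddChar ((m + 1 : ℕ) : ZMod (2 * m + 1)) : ℂ) ^ (k + 1) *
      (ZMod.stdAddChar ((m + 1 : ℕ) : ZMod (2 * m + 1)) : ℂ) ^ (2 * m - k) = 1 := by
    rw [← pow_add, show k + 1 + (2 * m - k) = 2 * m + 1 by omega, ← AddChar.map_nsmul_eq_pow]
    simp
  have e3 : ((-1) ^ (k + 1) * Complex.exp (α * Complex.I)) *
      ((-1) ^ (k + 1) * Complex.exp (-α * Complex.I)) = 1 := by
    rw [mul_mul_mul_comm, ← mul_pow, ← Complex.exp_add]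
    simp
  rw [e1] at e2 ⊢
  have e4 := mul_left_cancel₀ (left_ne_zero_of_mul_eq_one e2) (e2.trans e3.symm)
  rw [e4]
  push_cast
  rw [Complex.sin]
  linear_combination ((-1) ^ (k + 1) * (Complex.exp (α * Complex.I) - Complex.exp (-α * Complex.I))) *
    Complex.I_sq

/-- Gauss's evaluation of the quadratic Gauss sum modulo an odd prime `2 * m + 1`. -/
theorem sum_stdAddChar_sq (m : ℕ) [Fact (2 * m + 1).Prime] :
    ∑ x : ZMod (2 * m + 1), (ZMod.stdAddChar (x ^ 2) : ℂ) =
      (if Even m then 1 else Complex.I) * (Real.sqrt (2 * m + 1) : ℝ) := by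
  set w : ℂ := ZMod.stdAddChar ((m + 1 : ℕ) : ZMod (2 * m + 1)) with hw
  have hprim : IsPrimitiveRoot w (2 * m + 1) := by
    rw [hw, ZMod.stdAddChar_apply, ZMod.toCircle_natCast]
    have := Complex.isPrimitiveRoot_exp_of_coprime (m + 1) (2 * m + 1) (by omega)
      (by rw [show 2 * m + 1 = m + (m + 1) by ring]; simp)
    convert this using 2
    push_cast
    ring
  have hsum : ∑ x : ZMod (2 * m + 1), (ZMod.stdAddChar (x ^ 2) : ℂ) =
      ∑ t ∈ Finset.range (2 * m + 1), w ^ (2 * t ^ 2) := by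
    rw [Finset.sum_range]
    refine Finset.sum_congr rfl fun x _ => ?_
    rw [hw, ← AddChar.map_nsmul_eq_pow]
    congr 1
    have h0 : (2 * (m : ZMod (2 * m + 1)) + 1) = 0 := by
      exact_mod_cast ZMod.natCast_self (2 * m + 1)
    have hx : ((ZMod.val x : ℕ) : ZMod (2 * m + 1)) = x := ZMod.natCast_zmod_val x
    rw [nsmul_eq_mul]
    change x ^ 2 = ((2 * (ZMod.val x) ^ 2 : ℕ) : ZMod (2 * m + 1)) * _
    push_cast
    rw [hx]
    linear_combination -x ^ 2 * h0
  have hsq1 := sum_addChar_sq_sq (ZMod.isPrimitive_stdAddChar (2 * m + 1))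
  have hsq2 := prod_pow_sub_pow_sq hprim
  have hR : ∏ k ∈ Finset.range m, (w ^ (k + 1) - w ^ (2 * m - k)) =
      (∏ k ∈ Finset.range m, ((-1) ^ (k + 1) * Complex.I)) *
      ((∏ k ∈ Finset.range m, 2 * Real.sin (Real.pi * (k + 1) / (2 * m + 1)) : ℝ) : ℂ) := by
    rw [Complex.ofReal_prod, ← Finset.prod_mul_distrib]
    exact Finset.prod_congr rfl fun k hk => stdAddChar_pow_sub_pow (Finset.mem_range.1 hk)
  have hRpos : 0 < ∏ k ∈ Finset.range m, 2 * Real.sin (Real.pi * (k + 1) / (2 * m + 1)) := by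
    refine Finset.prod_pos fun k hk => mul_pos two_pos (Real.sin_pos_of_pos_of_lt_pi ?_ ?_)
    · positivity
    · rw [div_lt_iff₀ (by positivity)]
      have : (k : ℝ) + 1 ≤ m := by exact_mod_cast Finset.mem_range.1 hk
      have := Real.pi_pos
      have := Nat.cast_nonneg (α := ℝ) m
      gcongr
      linarith
  have hsgn : ∑ t ∈ Finset.range (2 * m + 1), w ^ (2 * t ^ 2) =
      (-1) ^ m * ∏ k ∈ Finset.range m, (w ^ (k + 1) - w ^ (2 * m - k)) := by
    have hne : (1 : ZMod (2 * m + 1)) ≠ -1 := by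
      exact (Ring.neg_one_ne_one_of_char_ne_two ringChar_zmod_ne_two).symm
    rw [← hsum]
    rcases sq_eq_sq_iff_eq_or_eq_neg.1 (hsq1.trans hsq2.symm) with h | h
    · have := intCast_eq_of_sum_eq_mul_prod hprim (ε := 1) (by rw [← hsum, h]; simp)
      rcases Nat.even_or_odd m with hm | hm
      · rw [h, hm.neg_one_pow, one_mul]
      · rw [hm.neg_one_pow] at this
        exact absurd (by simpa using this) hne
    · have := intCast_eq_of_sum_eq_mul_prod hprim (ε := -1) (by rw [← hsum, h]; simp)
      rcases Nat.even_or_odd m with hm | hm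
      · rw [hm.neg_one_pow] at this
        exact absurd (by simpa using this.symm) hne
      · rw [h, hm.neg_one_pow, neg_one_mul]
  have hval : ∑ x : ZMod (2 * m + 1), (ZMod.stdAddChar (x ^ 2) : ℂ) =
      (if Even m then 1 else Complex.I) *
      ((∏ k ∈ Finset.range m, 2 * Real.sin (Real.pi * (k + 1) / (2 * m + 1)) : ℝ) : ℂ) := by
    rw [hsum, hsgn, hR, ← mul_assoc, neg_one_pow_mul_prod_neg_one_pow_mul_I]
  rw [hval]
  generalize ∏ k ∈ Finset.range m, 2 * Real.sin (Real.pi * (k + 1) / (2 * m + 1)) = P at hRpos hval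
  rw [hval, mul_pow] at hsq1
  have hu : (if Even m then 1 else Complex.I) ^ 2 = (-1 : ℂ) ^ m := by
    split_ifs with hm
    · simp [hm.neg_one_pow]
    · simp [(Nat.not_even_iff_odd.1 hm).neg_one_pow]
  rw [hu] at hsq1
  have hP := mul_left_cancel₀ (pow_ne_zero m (by norm_num)) hsq1
  have hP' : P ^ 2 = 2 * m + 1 := by exact_mod_cast hP
  rw [← hP', Real.sqrt_sq hRpos.le]

lemma sum_stdAddChar_mul_sq (m : ℕ) [Fact (2 * m + 1).Prime] {c : ZMod (2 * m + 1)} (hc : c ≠ 0) :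
    ∑ x : ZMod (2 * m + 1), (ZMod.stdAddChar (c * x ^ 2) : ℂ) =
      quadraticChar (ZMod (2 * m + 1)) c *
        ((if Even m then 1 else Complex.I) * (Real.sqrt (2 * m + 1) : ℝ)) := by
  have hψ := ZMod.isPrimitive_stdAddChar (2 * m + 1)
  have h1 := sum_addChar_mul_sq ringChar_zmod_ne_two hψ (one_ne_zero (α := ZMod (2 * m + 1)))
  simp only [one_mul, map_one, Int.cast_one] at h1
  rw [sum_addChar_mul_sq ringChar_zmod_ne_two hψ hc, ← h1, sum_stdAddChar_sq]

end QuadraticGaussSum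

section KloostermanReduction

lemma zmod_inv_eq_of_mul_eq_one {q : ℕ} {x y : ZMod q} (h : x * y = 1) : x⁻¹ = y := by
  have hx : IsUnit x := IsUnit.of_mul_eq_one y h
  calc x⁻¹ = x⁻¹ * (x * y) := by rw [h, mul_one]
    _ = x⁻¹ * x * y := by ring
    _ = y := by rw [ZMod.inv_mul_of_unit x hx, one_mul]

lemma sum_Icc_not_dvd_eq_sum_isUnit {p n : ℕ} [NeZero (p ^ n)] (hp : p.Prime) (hn : n ≠ 0)
    (g : ZMod (p ^ n) → ℂ) :
    ∑ x ∈ (Finset.Icc 1 (p ^ n)).filter (fun x => ¬ p ∣ x), g x =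
      ∑ x : ZMod (p ^ n) with IsUnit x, g x := by
  refine Finset.sum_nbij' (fun x => (x : ZMod (p ^ n))) ZMod.val ?_ ?_ ?_ ?_ (fun _ _ => rfl)
  · intro x hx
    rw [Finset.mem_filter] at hx
    simpa [ZMod.isUnit_natCast_iff_not_dvd_pow hp (Nat.pos_of_ne_zero hn)] using hx.2
  · intro x hx
    have hx' := (Finset.mem_filter.1 hx).2
    rw [← ZMod.natCast_zmod_val x, ZMod.isUnit_natCast_iff_not_dvd_pow hp (Nat.pos_of_ne_zero hn)] at hx'
    rw [Finset.mem_filter, Finset.mem_Icc]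
    exact ⟨⟨Nat.pos_of_ne_zero fun h => hx' (h ▸ dvd_zero p), (ZMod.val_lt x).le⟩, hx'⟩
  · intro x hx
    rw [Finset.mem_filter, Finset.mem_Icc] at hx
    exact ZMod.val_natCast_of_lt (lt_of_le_of_ne hx.1.2 fun h => hx.2 (h ▸ dvd_pow_self p hn))
  · intro x _
    exact ZMod.natCast_zmod_val x

lemma isUnit_add_of_sq_eq_zero {R : Type*} [CommRing R] {x r : R} (hr : r ^ 2 = 0)
    (hx : IsUnit x) : IsUnit (x + r) := by
  obtain ⟨y, hy⟩ := hx.exists_right_inv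
  refine IsUnit.of_mul_eq_one (y - y ^ 2 * r) ?_
  linear_combination (1 - y * r) * hy - y ^ 2 * hr

/-- Only approximate critical points of the phase contribute to the Kloosterman sum. -/
lemma sum_isUnit_stdAddChar_eq_sum_critical {q : ℕ} [NeZero q] (a d : ZMod q) (hd : d ^ 2 = 0) :
    ∑ x : ZMod q with IsUnit x, (ZMod.stdAddChar (a * x + x⁻¹) : ℂ) =
      ∑ x : ZMod q with IsUnit x ∧ d * (a - x⁻¹ ^ 2) = 0, ZMod.stdAddChar (a * x + x⁻¹) := by
  have hq : (q : ℂ) ≠ 0 := Nat.cast_ne_zero.2 (NeZero.ne q)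
  refine mul_left_cancel₀ hq ?_
  have hsq : ∀ t : ZMod q, (d * t) ^ 2 = 0 := fun t => by rw [mul_pow, hd, zero_mul]
  have hshift : ∀ t : ZMod q, ∑ x : ZMod q with IsUnit x, (ZMod.stdAddChar (a * x + x⁻¹) : ℂ) =
      ∑ x : ZMod q with IsUnit x,
        (ZMod.stdAddChar (a * x + x⁻¹) : ℂ) * ZMod.stdAddChar (t * (d * (a - x⁻¹ ^ 2))) := by
    intro t
    symm
    refine Finset.sum_equiv (Equiv.addRight (d * t)) ?_ ?_
    · intro x
      simp only [Finset.mem_filter, Finset.mem_univ, true_and, Equiv.coe_addRight]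
      refine ⟨isUnit_add_of_sq_eq_zero (hsq t), fun h => ?_⟩
      have := isUnit_add_of_sq_eq_zero (r := -(d * t)) (by rw [neg_sq, hsq t]) h
      simpa using this
    · intro x hx
      have hu : x * x⁻¹ = 1 := ZMod.mul_inv_of_unit x (Finset.mem_filter.1 hx).2
      have hinv : (x + d * t)⁻¹ = x⁻¹ - x⁻¹ ^ 2 * (d * t) := by
        apply zmod_inv_eq_of_mul_eq_one
        linear_combination (1 - x⁻¹ * (d * t)) * hu - x⁻¹ ^ 2 * hsq t
      rw [← AddChar.map_add_eq_mul, Equiv.coe_addRight, hinv]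
      congr 1
      ring
  calc (q : ℂ) * ∑ x : ZMod q with IsUnit x, (ZMod.stdAddChar (a * x + x⁻¹) : ℂ)
      = ∑ t : ZMod q, ∑ x : ZMod q with IsUnit x,
          (ZMod.stdAddChar (a * x + x⁻¹) : ℂ) * ZMod.stdAddChar (t * (d * (a - x⁻¹ ^ 2))) := by
        rw [← Finset.sum_congr rfl fun t _ => hshift t, Finset.sum_const, Finset.card_univ,
          ZMod.card, nsmul_eq_mul]
    _ = _ := by
        rw [Finset.sum_comm, Finset.mul_sum, ← Finset.filter_filter,
          Finset.sum_filter (fun x : ZMod q => d * (a - x⁻¹ ^ 2) = 0)]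
        refine Finset.sum_congr rfl fun x _ => ?_
        rw [← Finset.mul_sum, AddChar.sum_mulShift _ (ZMod.isPrimitive_stdAddChar q), ZMod.card]
        split_ifs <;> simp [mul_comm]

lemma zmod_natCast_pow_eq_zero {p n k : ℕ} (h : n ≤ k) : (p : ZMod (p ^ n)) ^ k = 0 := by
  rw [← Nat.cast_pow, ZMod.natCast_eq_zero_iff]
  exact pow_dvd_pow p h

lemma sum_filter_prime_pow_mul_eq_zero {p n m l : ℕ} [NeZero (p ^ n)] (hn : m + l = n)
    (hp : p.Prime) (h : ZMod (p ^ n) → ℂ) :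
    ∑ y : ZMod (p ^ n) with (p : ZMod (p ^ n)) ^ l * y = 0, h y =
      ∑ u ∈ Finset.range (p ^ l), h ((p : ZMod (p ^ n)) ^ m * (u : ZMod (p ^ n))) := by
  have hpos : 0 < p ^ m := pow_pos hp.pos m
  have hcast : ∀ u : ℕ, (p : ZMod (p ^ n)) ^ m * (u : ZMod (p ^ n)) = ((p ^ m * u : ℕ) : ZMod (p ^ n)) := by
    intro u
    push_cast
    rfl
  have hpn : p ^ n = p ^ m * p ^ l := by rw [← hn, pow_add]
  symm
  refine Finset.sum_nbij' (fun u : ℕ => (p : ZMod (p ^ n)) ^ m * (u : ZMod (p ^ n)))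
    (fun y => y.val / p ^ m) ?_ ?_ ?_ ?_ (fun _ _ => rfl)
  · intro u _
    rw [Finset.mem_filter]
    refine ⟨Finset.mem_univ _, ?_⟩
    rw [← mul_assoc, ← pow_add, zmod_natCast_pow_eq_zero (by omega), zero_mul]
  · intro y _
    rw [Finset.mem_range, Nat.div_lt_iff_lt_mul hpos, mul_comm, ← hpn]
    exact ZMod.val_lt y
  · intro u hu
    rw [hcast, ZMod.val_natCast_of_lt, Nat.mul_div_cancel_left _ hpos]
    exact hpn ▸ Nat.mul_lt_mul_of_pos_left (Finset.mem_range.1 hu) hpos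
  · intro y hy
    have hy' := (Finset.mem_filter.1 hy).2
    have hdvd : p ^ m ∣ y.val := by
      rw [← ZMod.natCast_zmod_val y, ← Nat.cast_pow, ← Nat.cast_mul, ZMod.natCast_eq_zero_iff] at hy'
      refine Nat.dvd_of_mul_dvd_mul_left (pow_pos hp.pos l) (dvd_trans (dvd_of_eq ?_) hy')
      rw [hpn, mul_comm]
    change (p : ZMod (p ^ n)) ^ m * ((y.val / p ^ m : ℕ) : ZMod (p ^ n)) = y
    rw [hcast, Nat.mul_div_cancel' hdvd, ZMod.natCast_zmod_val]

/-- The contribution of a neighbourhood of one exact critical point. -/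
lemma sum_near_critical {p n m l : ℕ} [NeZero (p ^ n)] (hn : m + l = n) (hp : p.Prime)
    (hml : l ≤ 2 * m) {s σ : ZMod (p ^ n)} (hs : s * σ = 1) :
    ∑ x : ZMod (p ^ n) with (p : ZMod (p ^ n)) ^ l * (x - σ) = 0,
      (ZMod.stdAddChar (s ^ 2 * x + x⁻¹) : ℂ) =
    ZMod.stdAddChar (2 * s) * ∑ u ∈ Finset.range (p ^ l),
      (ZMod.stdAddChar (s ^ 3 * (p : ZMod (p ^ n)) ^ (2 * m) * (u : ZMod (p ^ n)) ^ 2) : ℂ) := by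
  have h1 : ∑ x : ZMod (p ^ n) with (p : ZMod (p ^ n)) ^ l * (x - σ) = 0,
      (ZMod.stdAddChar (s ^ 2 * x + x⁻¹) : ℂ) =
      ∑ y : ZMod (p ^ n) with (p : ZMod (p ^ n)) ^ l * y = 0,
        (ZMod.stdAddChar (s ^ 2 * (y + σ) + (y + σ)⁻¹) : ℂ) := by
    symm
    refine Finset.sum_equiv (Equiv.addRight σ) ?_ ?_
    · intro y
      simp
    · intro y _
      rfl
  rw [h1, sum_filter_prime_pow_mul_eq_zero hn hp, Finset.mul_sum]
  refine Finset.sum_congr rfl fun u _ => ?_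
  rw [← AddChar.map_add_eq_mul]
  congr 1
  set r : ZMod (p ^ n) := (p : ZMod (p ^ n)) ^ m * (u : ZMod (p ^ n)) with hr
  have hr3 : r ^ 3 = 0 := by
    rw [hr, mul_pow, ← pow_mul, zmod_natCast_pow_eq_zero (by omega), zero_mul]
  have hinv : (r + σ)⁻¹ = s - s ^ 2 * r + s ^ 3 * r ^ 2 := by
    apply zmod_inv_eq_of_mul_eq_one
    linear_combination (1 - s * r + s ^ 2 * r ^ 2) * hs + s ^ 3 * hr3
  rw [hinv, hr]
  linear_combination s * hs

lemma isUnit_or_isUnit_of_isUnit_sub {p n : ℕ} [NeZero (p ^ n)] (hp : p.Prime) (hn : n ≠ 0)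
    {x y : ZMod (p ^ n)} (h : IsUnit (x - y)) : IsUnit x ∨ IsUnit y := by
  have hdvd : ∀ z : ZMod (p ^ n), ¬ IsUnit z → (p : ZMod (p ^ n)) ∣ z := by
    intro z hz
    rw [← ZMod.natCast_zmod_val z,
      ZMod.isUnit_natCast_iff_not_dvd_pow hp (Nat.pos_of_ne_zero hn), not_not] at hz
    rw [← ZMod.natCast_zmod_val z]
    exact Nat.cast_dvd_cast hz
  by_contra! hxy
  have hpu := isUnit_of_dvd_unit (dvd_sub (hdvd x hxy.1) (hdvd y hxy.2)) h
  rw [ZMod.isUnit_natCast_iff_not_dvd_pow hp (Nat.pos_of_ne_zero hn)] at hpu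
  exact hpu dvd_rfl

/-- Stationary phase for the Kloosterman sum modulo `p ^ n`, where `n = m + l`. -/
lemma sum_isUnit_stdAddChar_eq {p n m l : ℕ} [NeZero (p ^ n)] (hn : m + l = n) (hp : p.Prime)
    (hp2 : p ≠ 2) (hm : m ≠ 0) (hml : m ≤ l) (hlm : l ≤ 2 * m) {s : ZMod (p ^ n)} (hs : IsUnit s) :
    ∑ x : ZMod (p ^ n) with IsUnit x, (ZMod.stdAddChar (s ^ 2 * x + x⁻¹) : ℂ) =
      ZMod.stdAddChar (2 * s) * ∑ u ∈ Finset.range (p ^ l),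
        (ZMod.stdAddChar (s ^ 3 * (p : ZMod (p ^ n)) ^ (2 * m) * (u : ZMod (p ^ n)) ^ 2) : ℂ) +
      ZMod.stdAddChar (2 * -s) * ∑ u ∈ Finset.range (p ^ l),
        (ZMod.stdAddChar ((-s) ^ 3 * (p : ZMod (p ^ n)) ^ (2 * m) * (u : ZMod (p ^ n)) ^ 2) : ℂ) := by
  have hn0 : n ≠ 0 := by omega
  obtain ⟨σ, hσ⟩ := hs.exists_right_inv
  set d : ZMod (p ^ n) := (p : ZMod (p ^ n)) ^ l with hd
  have hd2 : d ^ 2 = 0 := by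
    rw [hd, ← pow_mul, zmod_natCast_pow_eq_zero (by omega)]
  have hdne : d ≠ 0 := by
    rw [hd, ← Nat.cast_pow, Ne, ZMod.natCast_eq_zero_iff, Nat.pow_dvd_pow_iff_le_right hp.one_lt]
    omega
  have h2 : IsUnit (2 : ZMod (p ^ n)) := by
    have := (ZMod.isUnit_natCast_iff_not_dvd_pow (a := 2) hp (Nat.pos_of_ne_zero hn0)).2 fun h =>
      hp2 ((Nat.prime_dvd_prime_iff_eq hp Nat.prime_two).1 h)
    exact_mod_cast this
  have hσu : IsUnit σ := IsUnit.of_mul_eq_one s (by rw [mul_comm, hσ])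
  have hnear : ∀ τ x : ZMod (p ^ n), IsUnit τ → d * (x - τ) = 0 → IsUnit x := by
    intro τ x hτ hx
    rcases isUnit_or_isUnit_of_isUnit_sub hp hn0 (x := x) (y := x - τ) (by simpa using hτ) with h | h
    · exact h
    · exact absurd ((h.mul_left_eq_zero).1 hx) hdne
  have hiff : ∀ x : ZMod (p ^ n), (IsUnit x ∧ d * (s ^ 2 - x⁻¹ ^ 2) = 0) ↔
      (d * (x - σ) = 0 ∨ d * (x - -σ) = 0) := by
    intro x
    constructor
    · rintro ⟨hx, h⟩
      have hx1 := ZMod.mul_inv_of_unit x hx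
      have hprod : d * (x - σ) * (x - -σ) = 0 := by
        linear_combination x ^ 2 * σ ^ 2 * h - d * x ^ 2 * (s * σ + 1) * hσ +
          d * σ ^ 2 * (x * x⁻¹ + 1) * hx1
      rcases isUnit_or_isUnit_of_isUnit_sub hp hn0 (x := x - -σ) (y := x - σ)
        (by convert h2.mul hσu using 1; ring) with h' | h'
      · exact Or.inl (h'.mul_left_eq_zero.1 hprod)
      · refine Or.inr (h'.mul_left_eq_zero.1 ?_)
        linear_combination hprod
    · intro h
      have hx : IsUnit x := h.elim (hnear σ x hσu) (hnear (-σ) x hσu.neg)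
      have hx1 := ZMod.mul_inv_of_unit x hx
      have hprod : d * (x - σ) * (x - -σ) = 0 := by
        rcases h with h | h
        · rw [h, zero_mul]
        · linear_combination (x - σ) * h
      refine ⟨hx, ?_⟩
      linear_combination s ^ 2 * x⁻¹ ^ 2 * hprod + d * x⁻¹ ^ 2 * (s * σ + 1) * hσ -
          d * s ^ 2 * (x * x⁻¹ + 1) * hx1
  have hdisj : Disjoint (Finset.univ.filter fun x : ZMod (p ^ n) => d * (x - σ) = 0)
      (Finset.univ.filter fun x : ZMod (p ^ n) => d * (x - -σ) = 0) := by
    rw [Finset.disjoint_filter]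
    intro x _ h1 h3
    refine hdne ((h2.mul hσu).mul_left_eq_zero.1 ?_)
    linear_combination h3 - h1
  rw [sum_isUnit_stdAddChar_eq_sum_critical (s ^ 2) d hd2, Finset.filter_congr fun x _ => hiff x,
    Finset.filter_or, Finset.sum_union hdisj, sum_near_critical hn hp hlm hσ,
    ← sum_near_critical hn hp hlm (s := -s) (σ := -σ) (by rw [neg_mul_neg, hσ]), neg_sq]

lemma sum_range_mul_of_periodic {f : ℕ → ℂ} {p : ℕ} (hf : Function.Periodic f p) (N : ℕ) :
    ∑ u ∈ Finset.range (N * p), f u = N * ∑ u ∈ Finset.range p, f u := by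
  induction N with
  | zero => simp
  | succ N ih =>
    rw [Nat.succ_mul, Finset.sum_range_add, ih]
    have : ∀ u ∈ Finset.range p, f (N * p + u) = f u := fun u _ => by
      rw [add_comm]
      exact hf.nat_mul N u
    rw [Finset.sum_congr rfl this]
    push_cast
    ring

lemma sum_range_eq_sum_zmod {p : ℕ} [NeZero p] (g : ZMod p → ℂ) :
    ∑ u ∈ Finset.range p, g (u : ZMod p) = ∑ x : ZMod p, g x := by
  refine Finset.sum_nbij' (fun u => (u : ZMod p)) ZMod.val ?_ ?_ ?_ ?_ (fun _ _ => rfl)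
  · simp
  · intro x _
    simpa using ZMod.val_lt x
  · intro u hu
    exact ZMod.val_natCast_of_lt (Finset.mem_range.1 hu)
  · intro x _
    exact ZMod.natCast_zmod_val x

lemma sum_range_stdAddChar_prime_pow_mul_sq {p m : ℕ} [NeZero p] [NeZero (p ^ (2 * m + 1))]
    (c : ℤ) :
    ∑ u ∈ Finset.range (p ^ (m + 1)), (ZMod.stdAddChar ((c : ZMod (p ^ (2 * m + 1))) *
        (p : ZMod (p ^ (2 * m + 1))) ^ (2 * m) * (u : ZMod (p ^ (2 * m + 1))) ^ 2) : ℂ) =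
      (p : ℂ) ^ m * ∑ x : ZMod p, (ZMod.stdAddChar ((c : ZMod p) * x ^ 2) : ℂ) := by
  have hp0 : (p : ℂ) ≠ 0 := Nat.cast_ne_zero.2 (NeZero.ne p)
  have h : ∀ u : ℕ, (ZMod.stdAddChar ((c : ZMod (p ^ (2 * m + 1))) *
        (p : ZMod (p ^ (2 * m + 1))) ^ (2 * m) * (u : ZMod (p ^ (2 * m + 1))) ^ 2) : ℂ) =
      ZMod.stdAddChar ((c : ZMod p) * (u : ZMod p) ^ 2) := by
    intro u
    have h1 := ZMod.stdAddChar_coe (N := p ^ (2 * m + 1)) (c * (p : ℤ) ^ (2 * m) * (u : ℤ) ^ 2)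
    have h2 := ZMod.stdAddChar_coe (N := p) (c * (u : ℤ) ^ 2)
    push_cast at h1 h2
    rw [h1, h2]
    congr 1
    field_simp
    ring
  rw [Finset.sum_congr rfl fun u _ => h u, pow_succ, sum_range_mul_of_periodic,
    sum_range_eq_sum_zmod (fun x => ZMod.stdAddChar ((c : ZMod p) * x ^ 2)), Nat.cast_pow]
  intro u
  simp

end KloostermanReduction

section KloostermanEvaluation

lemma klFull_one_eq {p n : ℕ} [NeZero (p ^ n)] (hp : p.Prime) (hn : n ≠ 0) (a : ZMod (p ^ n)) :
    klFull p n a 1 = (Real.sqrt ((p : ℝ) ^ n))⁻¹ *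
      ∑ x : ZMod (p ^ n) with IsUnit x, (ZMod.stdAddChar (a * x + x⁻¹) : ℂ) := by
  rw [klFull, klPartial, sum_Icc_not_dvd_eq_sum_isUnit hp hn
    (fun x => eMod (p ^ n) (a * x + 1 * x⁻¹))]
  simp only [one_mul, eMod_eq_stdAddChar]

lemma stdAddChar_two_mul_intCast {q : ℕ} [NeZero q] (s : ℤ) :
    (ZMod.stdAddChar (2 * (s : ZMod q)) : ℂ) =
      Complex.exp (((4 * Real.pi * (s : ℝ) / (q : ℝ) : ℝ) : ℂ) * Complex.I) := by
  have h := ZMod.stdAddChar_coe (N := q) (2 * s)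
  push_cast at h
  rw [h]
  congr 1
  push_cast
  ring

lemma stdAddChar_two_mul_neg_intCast {q : ℕ} [NeZero q] (s : ℤ) :
    (ZMod.stdAddChar (2 * -(s : ZMod q)) : ℂ) =
      Complex.exp (-((4 * Real.pi * (s : ℝ) / (q : ℝ) : ℝ) : ℂ) * Complex.I) := by
  rw [← Int.cast_neg, stdAddChar_two_mul_intCast]
  congr 2
  push_cast
  ring

lemma jacobiSym_prime_pow_of_even {p n : ℕ} (hp : p.Prime) (hn : Even n) {s : ℤ}
    (hs : ¬ (p : ℤ) ∣ s) : jacobiSym s (p ^ n) = 1 := by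
  have : NeZero p := ⟨hp.ne_zero⟩
  obtain ⟨m, rfl⟩ := hn
  rw [jacobiSym.pow_right, ← two_mul, pow_mul, jacobiSym.sq_one, one_pow]
  rw [Int.gcd_comm, ← Int.isCoprime_iff_gcd_eq_one]
  exact (Nat.prime_iff_prime_int.1 hp).coprime_iff_not_dvd.2 hs

lemma jacobiSym_prime_pow_of_odd {p : ℕ} [Fact p.Prime] (m : ℕ) {s : ℤ}
    (hs : ¬ (p : ℤ) ∣ s) :
    jacobiSym s (p ^ (2 * m + 1)) = quadraticChar (ZMod p) (s : ZMod p) := by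
  have : NeZero p := ⟨(Fact.out : p.Prime).ne_zero⟩
  have h := jacobiSym_prime_pow_of_even (Fact.out : p.Prime) (even_two_mul m) hs
  rw [jacobiSym.pow_right] at h ⊢
  rw [pow_succ, h, one_mul, ← jacobiSym.legendreSym.to_jacobiSym, legendreSym]

lemma quadraticChar_pow_three {F : Type*} [Field F] [Fintype F] [DecidableEq F] {x : F}
    (hx : x ≠ 0) : quadraticChar F (x ^ 3) = quadraticChar F x := by
  rw [pow_succ, map_mul, quadraticChar_sq_one' hx, one_mul]

lemma quadraticChar_neg_zmod {m : ℕ} [Fact (2 * m + 1).Prime] (x : ZMod (2 * m + 1)) :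
    quadraticChar (ZMod (2 * m + 1)) (-x) = (-1) ^ m * quadraticChar (ZMod (2 * m + 1)) x := by
  rw [← neg_one_mul, map_mul, quadraticChar_neg_one (ringChar_zmod_ne_two (m := m)), ZMod.card,
    ZMod.χ₄_eq_neg_one_pow (by omega), show (2 * m + 1) / 2 = m by omega]

lemma klFull_sq_of_even {p m : ℕ} (hp : p.Prime) (hp2 : p ≠ 2) (hm : m ≠ 0) {s : ℤ}
    (hs : IsUnit (s : ZMod (p ^ (m + m)))) :
    klFull p (m + m) ((s : ZMod (p ^ (m + m))) ^ 2) 1 =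
      2 * (Real.cos (4 * Real.pi * (s : ℝ) / (p : ℝ) ^ (m + m)) : ℝ) := by
  have : NeZero (p ^ (m + m)) := ⟨pow_ne_zero _ hp.ne_zero⟩
  have hp0 : (p : ℂ) ≠ 0 := Nat.cast_ne_zero.2 hp.ne_zero
  have hsqrt : Real.sqrt ((p : ℝ) ^ (m + m)) = (p : ℝ) ^ m := by
    rw [pow_add, Real.sqrt_mul_self (by positivity)]
  rw [klFull_one_eq hp (by omega), sum_isUnit_stdAddChar_eq rfl hp hp2 hm le_rfl (by omega) hs,
    zmod_natCast_pow_eq_zero (by omega), stdAddChar_two_mul_intCast,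
    stdAddChar_two_mul_neg_intCast, hsqrt, Complex.ofReal_cos, Complex.two_cos]
  simp only [mul_zero, zero_mul, AddChar.map_zero_eq_one, Finset.sum_const, Finset.card_range,
    nsmul_eq_mul, mul_one]
  push_cast
  field_simp

lemma klFull_sq_of_odd {M m : ℕ} [Fact (2 * M + 1).Prime] (hm : m ≠ 0) {s : ℤ}
    (hs0 : (s : ZMod (2 * M + 1)) ≠ 0)
    (hs : IsUnit (s : ZMod ((2 * M + 1) ^ (2 * m + 1)))) :
    klFull (2 * M + 1) (2 * m + 1) ((s : ZMod ((2 * M + 1) ^ (2 * m + 1))) ^ 2) 1 =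
      2 * (quadraticChar (ZMod (2 * M + 1)) (s : ZMod (2 * M + 1)) : ℂ) *
        (Real.cos (4 * Real.pi * (s : ℝ) / ((2 * M + 1 : ℕ) : ℝ) ^ (2 * m + 1) +
          (if Even M then 0 else Real.pi / 2)) : ℝ) := by
  have hp : (2 * M + 1).Prime := Fact.out
  have hsqrt : Real.sqrt (((2 * M + 1 : ℕ) : ℝ) ^ (2 * m + 1)) =
      ((2 * M + 1 : ℕ) : ℝ) ^ m * Real.sqrt (2 * M + 1) := by
    rw [pow_succ, Real.sqrt_mul (by positivity), mul_comm 2 m, pow_mul,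
      Real.sqrt_sq (by positivity)]
    push_cast
    rfl
  have hroot : ((Real.sqrt (2 * M + 1) : ℝ) : ℂ) ≠ 0 :=
    Complex.ofReal_ne_zero.2 (Real.sqrt_pos.2 (by positivity)).ne'
  have hpow : (((2 * M + 1 : ℕ) : ℂ)) ^ m ≠ 0 := pow_ne_zero _ (Nat.cast_ne_zero.2 hp.ne_zero)
  have hsum := fun {c : ℤ} (hc : (c : ZMod (2 * M + 1)) ≠ 0) =>
    (sum_range_stdAddChar_prime_pow_mul_sq (p := 2 * M + 1) (m := m) c).trans
      (congrArg _ (sum_stdAddChar_mul_sq M hc))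
  have h1 := hsum (c := s ^ 3) (by push_cast; exact pow_ne_zero _ hs0)
  have h2 := hsum (c := (-s) ^ 3) (by push_cast; exact pow_ne_zero _ (neg_ne_zero.2 hs0))
  simp only [Int.cast_pow, Int.cast_neg] at h1 h2
  rw [quadraticChar_pow_three hs0] at h1
  rw [quadraticChar_pow_three (neg_ne_zero.2 hs0), quadraticChar_neg_zmod] at h2
  rw [klFull_one_eq hp (by omega), sum_isUnit_stdAddChar_eq (m := m) (l := m + 1) (by omega) hp
    (by omega) hm (by omega) (by omega) hs, h1, h2, stdAddChar_two_mul_intCast,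
    stdAddChar_two_mul_neg_intCast, hsqrt, Nat.cast_pow]
  generalize 4 * Real.pi * (s : ℝ) / ((2 * M + 1 : ℕ) : ℝ) ^ (2 * m + 1) = t
  rw [Complex.ofReal_inv, Complex.ofReal_mul, Complex.ofReal_pow, Complex.ofReal_natCast]
  generalize ((2 * M + 1 : ℕ) : ℂ) ^ m = P at *
  split_ifs with hM
  · rw [add_zero, Complex.ofReal_cos, Complex.cos, hM.neg_one_pow]
    field_simp
    push_cast
    ring
  · rw [Real.cos_add_pi_div_two, Complex.ofReal_neg, Complex.ofReal_sin, Complex.sin,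
      (Nat.not_even_iff_odd.1 hM).neg_one_pow]
    field_simp
    push_cast
    ring

end KloostermanEvaluation

/-- For `n ≥ 2` and `p ≥ 2n-5` an odd prime, if `a` is a nonzero square
modulo `p` and `s² ≡ a (mod p^n)`, then
`Kl_{p^n}(a,1) = 2 (s/p^n) cos(4πs/p^n + θ_{p^n})` with `θ_{p^n}` as indicated. -/
theorem kloosterman_eval (n : ℕ) (hn : 2 ≤ n) (p : ℕ) (hp : p.Prime) (hodd : Odd p)
    (hsize : 2 * n - 5 ≤ p) (a : ℤ) (ha : ¬ (p : ℤ) ∣ a)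
    (hsq : ∃ y : ZMod p, y ^ 2 = (a : ZMod p))
    (s : ℤ) (hs : s ^ 2 ≡ a [ZMOD ((p : ℤ) ^ n)]) :
    klFull p n (a : ZMod (p ^ n)) 1 =
      2 * (jacobiSym s (p ^ n) : ℂ) *
        (Real.cos (4 * Real.pi * (s : ℝ) / (p : ℝ) ^ n +
          (if Even n ∨ p % 4 = 1 then 0 else Real.pi / 2)) : ℝ) := by
  have hps : ¬ (p : ℤ) ∣ s := fun h => ha <| by
    have h1 : (p : ℤ) ∣ a - s ^ 2 := (dvd_pow_self _ (by omega)).trans hs.dvd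
    exact (dvd_sub_left (h.trans (dvd_pow_self s two_ne_zero))).1 h1
  have hunit : IsUnit (s : ZMod (p ^ n)) := by
    rw [ZMod.coe_int_isUnit_iff_isCoprime]
    push_cast
    exact ((Nat.prime_iff_prime_int.1 hp).coprime_iff_not_dvd.2 hps).pow_left
  have has : (a : ZMod (p ^ n)) = (s : ZMod (p ^ n)) ^ 2 := by
    rw [← Int.cast_pow, ZMod.intCast_eq_intCast_iff]
    push_cast
    exact hs.symm
  rw [has]
  rcases Nat.even_or_odd n with hne | ⟨m, rfl⟩
  · rw [jacobiSym_prime_pow_of_even hp hne hps, if_pos (Or.inl hne), add_zero, Int.cast_one,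
      mul_one]
    obtain ⟨m, rfl⟩ := hne
    exact klFull_sq_of_even hp (fun h => absurd (h ▸ hodd) (by decide)) (by omega) hunit
  · obtain ⟨M, rfl⟩ := hodd
    have : Fact (2 * M + 1).Prime := ⟨hp⟩
    rw [klFull_sq_of_odd (by omega) (mt (ZMod.intCast_zmod_eq_zero_iff_dvd s _).1 hps) hunit,
      jacobiSym_prime_pow_of_odd m hps]
    have hiff : (Even (2 * m + 1) ∨ (2 * M + 1) % 4 = 1) ↔ Even M := by
      simp only [Nat.even_iff]
      omega
    simp only [hiff]

end
end

section
/- Let p be an odd prime, n ≥ 2 an integer, and T a nonempty finite subset of ℤ/p^nℤ whose elements have pairwise distinct reductions modulo p; set K := |T|. Let (ℓ_τ)_{τ∈T} be integers with |ℓ_τ| < p for all τ and ℓ_τ ≠ 0 for at least one τ. Then for every residue w modulo p, the number of tuples b = (b_τ)_{τ∈T} of integers in {1, …, (p−1)/2} satisfying: (i) b_τ² − τ ≡ b_{τ'}² − τ' (mod p) for all τ, τ' ∈ T; (ii) p ∤ (b_τ² − τ) for all τ ∈ T; (iii) Σ_{τ∈T} ℓ_τ·b_τ^{−1} ≡ w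 (mod p); and (iv) Σ_{τ∈T} ℓ_τ·b_τ^{−(2j−1)} ≡ 0 (mod p) for every j ∈ {2, …, n−1} (inverses taken modulo p), is at most K·2^{K−1}. -/
open scoped BigOperators
open Filter MeasureTheory

noncomputable section

section

open Polynomial

/-- The matrix of multiplication by `∑ i, l i * (s i)⁻¹ - w`, where `(s i) ^ 2 = X + t i`, in the
basis of the products `∏ i ∈ A, s i`, with the denominator of each row cleared. -/
def sqrtMatrix {F ι : Type*} [Field F] [Fintype ι] [DecidableEq ι]
    (t l : ι → F) (w : F) : Matrix (Finset ι) (Finset ι) F[X] :=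
  fun A B =>
    (∑ i, if B = symmDiff A {i} then C (l i) * ∏ j ∈ Aᶜ.erase i, (X + C (t j)) else 0)
      - if B = A then C w * ∏ j ∈ Aᶜ, (X + C (t j)) else 0

lemma natDegree_prod_X_add_C_le {F ι : Type*} [Field F] (t : ι → F) (A : Finset ι) :
    (∏ j ∈ A, (X + C (t j))).natDegree ≤ A.card := by
  refine (natDegree_prod_le _ _).trans ?_
  simp

lemma natDegree_det_le_sum {R n : Type*} [CommRing R] [Fintype n] [DecidableEq n]
    (M : Matrix n n R[X]) (d : n → ℕ) (h : ∀ i j, (M i j).natDegree ≤ d i) :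
    M.det.natDegree ≤ ∑ i, d i := by
  rw [← Matrix.det_transpose, Matrix.det_apply]
  refine natDegree_sum_le_of_forall_le _ _ fun σ _ => ?_
  refine (natDegree_smul_le _ _).trans ((natDegree_prod_le _ _).trans ?_)
  exact Finset.sum_le_sum fun i _ => h i (σ i)

lemma sum_card_compl_finset {ι : Type*} [Fintype ι] [DecidableEq ι] :
    ∑ A : Finset ι, (Aᶜ).card = Fintype.card ι * 2 ^ (Fintype.card ι - 1) := by
  have hsymm : ∑ A : Finset ι, (Aᶜ).card = ∑ A : Finset ι, A.card :=
    Equiv.sum_comp (Function.Involutive.toPerm (compl : Finset ι → Finset ι) compl_involutive)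
      Finset.card
  rw [hsymm, ← Finset.powerset_univ, Finset.sum_powerset_apply_card (fun m => m)]
  simpa [mul_comm] using Nat.sum_range_mul_choose (Fintype.card ι)

variable {F ι : Type*} [Field F] [Fintype ι] [DecidableEq ι] (t l : ι → F) (w : F)

lemma natDegree_sqrtMatrix_le (A B : Finset ι) :
    (sqrtMatrix t l w A B).natDegree ≤ (Aᶜ).card := by
  refine (natDegree_sub_le _ _).trans (max_le (natDegree_sum_le_of_forall_le _ _ fun i _ => ?_) ?_)
  · split_ifs
    · exact (natDegree_C_mul_le _ _).trans ((natDegree_prod_X_add_C_le t _).trans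
        (Finset.card_le_card (Finset.erase_subset _ _)))
    · simp
  · split_ifs
    · exact (natDegree_C_mul_le _ _).trans (natDegree_prod_X_add_C_le t _)
    · simp

lemma eval_sqrtMatrix_mulVec (x : F) (v : Finset ι → F) (A : Finset ι) :
    ((sqrtMatrix t l w).map (eval x)).mulVec v A =
      (∑ i, l i * (∏ j ∈ Aᶜ.erase i, (x + t j)) * v (symmDiff A {i}))
        - w * (∏ j ∈ Aᶜ, (x + t j)) * v A := by
  simp only [Matrix.mulVec, dotProduct, Matrix.map_apply, sqrtMatrix, eval_sub, eval_finsetSum,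
    sub_mul, Finset.sum_sub_distrib, Finset.sum_mul]
  rw [Finset.sum_comm]
  simp [apply_ite (eval x), eval_prod, ite_mul]

lemma eval_det_sqrtMatrix (x : F) :
    (sqrtMatrix t l w).det.eval x = ((sqrtMatrix t l w).map (eval x)).det := by
  simpa using RingHom.map_det (evalRingHom x) (sqrtMatrix t l w)

lemma eval_det_sqrtMatrix_eq_zero (x : F) (s : ι → F) (hs : ∀ i, s i ≠ 0)
    (hsq : ∀ i, s i ^ 2 = x + t i) (hw : ∑ i, l i * (s i)⁻¹ = w) :
    (sqrtMatrix t l w).det.eval x = 0 := by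
  rw [eval_det_sqrtMatrix, ← Matrix.exists_mulVec_eq_zero_iff]
  refine ⟨fun A => ∏ j ∈ A, s j, fun h => ?_, ?_⟩
  · simpa using congrFun h ∅
  · ext A
    rw [eval_sqrtMatrix_mulVec, ← hw, Finset.sum_mul, Finset.sum_mul, Pi.zero_apply, sub_eq_zero]
    refine Finset.sum_congr rfl fun i _ => ?_
    simp only [← hsq]
    by_cases hi : i ∈ A
    · have h1 : symmDiff A {i} = A.erase i := by
        ext j; by_cases hj : j = i <;> simp [Finset.mem_symmDiff, hj, hi]
      rw [h1, Finset.erase_eq_of_notMem (by simpa using hi), ← Finset.mul_prod_erase A s hi]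
      field_simp [hs i]
    · have h1 : symmDiff A {i} = insert i A := by
        ext j; by_cases hj : j = i <;> simp [Finset.mem_symmDiff, hj, hi]
      rw [h1, Finset.prod_insert hi,
        ← Finset.mul_prod_erase Aᶜ (fun j => s j ^ 2) (by simpa using hi : i ∈ Aᶜ)]
      field_simp [hs i]

lemma det_sqrtMatrix_ne_zero (ht : Function.Injective t) {k : ι} (hk : l k ≠ 0) :
    (sqrtMatrix t l w).det ≠ 0 := by
  intro h0
  have h1 : (sqrtMatrix t l w).det.eval (-t k) = 0 := by simp [h0]
  rw [eval_det_sqrtMatrix, ← Matrix.exists_mulVec_eq_zero_iff] at h1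
  obtain ⟨v, hv, hMv⟩ := h1
  have hrow : ∀ A, _ := fun A =>
    (eval_sqrtMatrix_mulVec t l w (-t k) v A).symm.trans (congrFun hMv A)
  have hprod : ∀ A : Finset ι, k ∉ A → ∏ j ∈ A, (-t k + t j) ≠ 0 := fun A hA =>
    Finset.prod_ne_zero_iff.2 fun j hj h =>
      hA (ht (show t j = t k by linear_combination h) ▸ hj)
  have hzero : ∀ A : Finset ι, k ∈ A → ∏ j ∈ A, (-t k + t j) = 0 := fun A hA =>
    Finset.prod_eq_zero hA (by simp)
  have hins : ∀ A, k ∉ A → v (symmDiff A {k}) = 0 := by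
    intro A hA
    have h := hrow A
    rw [Finset.sum_eq_single k, hzero Aᶜ (by simpa using hA)] at h
    · simpa [hk, hprod] using h
    · intro i _ hik
      rw [hzero _ (by simp [hA, Ne.symm hik])]
      simp
    · simp
  have hmem : ∀ A, k ∈ A → v A = 0 := fun A hA => by
    simpa using hins (symmDiff A {k}) (by simp [Finset.mem_symmDiff, hA])
  refine hv (funext fun A => ?_)
  by_cases hA : k ∈ A
  · exact hmem A hA
  · have h := hrow (symmDiff A {k})
    rw [Finset.sum_eq_single k, hmem (symmDiff A {k}) (by simp [Finset.mem_symmDiff, hA])] at h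
    · simpa [hk, hprod] using h
    · intro i _ hik
      rw [hmem _ (by simp [Finset.mem_symmDiff, hA, Ne.symm hik])]
      simp
    · simp

/-- There are few shifts `x` for which all `x + t i` are nonzero squares admitting square roots
whose inverses satisfy a given nontrivial linear relation. -/
theorem finite_and_ncard_sqrt_relation_le (ht : Function.Injective t) (hl : ∃ k, l k ≠ 0) :
    {x : F | ∃ s : ι → F, (∀ i, s i ≠ 0) ∧ (∀ i, s i ^ 2 = x + t i) ∧
      ∑ i, l i * (s i)⁻¹ = w}.Finite ∧
    {x : F | ∃ s : ι → F, (∀ i, s i ≠ 0) ∧ (∀ i, s i ^ 2 = x + t i) ∧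
      ∑ i, l i * (s i)⁻¹ = w}.ncard ≤ Fintype.card ι * 2 ^ (Fintype.card ι - 1) := by
  classical
  obtain ⟨k, hk⟩ := hl
  have hne := det_sqrtMatrix_ne_zero t l w ht hk
  have hsub : {x : F | ∃ s : ι → F, (∀ i, s i ≠ 0) ∧ (∀ i, s i ^ 2 = x + t i) ∧
      ∑ i, l i * (s i)⁻¹ = w} ⊆ ((sqrtMatrix t l w).det.roots.toFinset : Set F) := by
    rintro x ⟨s, hs, hsq, hw⟩
    simpa [hne] using eval_det_sqrtMatrix_eq_zero t l w x s hs hsq hw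
  refine ⟨(Finset.finite_toSet _).subset hsub, ?_⟩
  calc _ ≤ (sqrtMatrix t l w).det.roots.toFinset.card := by
        simpa only [Set.ncard_coe_finset] using Set.ncard_le_ncard hsub (Finset.finite_toSet _)
    _ ≤ (sqrtMatrix t l w).det.natDegree := (Multiset.toFinset_card_le _).trans (card_roots' _)
    _ ≤ ∑ A : Finset ι, (Aᶜ).card := natDegree_det_le_sum _ _ (natDegree_sqrtMatrix_le t l w)
    _ = _ := sum_card_compl_finset

end

/-- Squaring modulo `p` is injective on `{1, …, (p - 1) / 2}`. -/
lemma eq_of_sq_eq_of_le_half {p a b : ℕ} (hp : p.Prime) (ha : 1 ≤ a ∧ a ≤ (p - 1) / 2)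
    (hb : 1 ≤ b ∧ b ≤ (p - 1) / 2) (h : (a : ZMod p) ^ 2 = (b : ZMod p) ^ 2) : a = b := by
  have := Fact.mk hp
  have := hp.two_le
  rcases sq_eq_sq_iff_eq_or_eq_neg.1 h with h | h
  · rw [ZMod.natCast_eq_natCast_iff] at h
    exact Nat.ModEq.eq_of_lt_of_lt h (by omega) (by omega)
  · rw [eq_neg_iff_add_eq_zero, ← Nat.cast_add, ZMod.natCast_eq_zero_iff] at h
    have := Nat.le_of_dvd (by omega) h
    omega

lemma natCast_ne_zero_of_le_half {p a : ℕ} (hp : p.Prime) (ha : 1 ≤ a ∧ a ≤ (p - 1) / 2) :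
    (a : ZMod p) ≠ 0 := by
  rw [Ne, ZMod.natCast_eq_zero_iff]
  intro h
  have := hp.two_le
  have := Nat.le_of_dvd (by omega) h
  omega

/-- The counting argument: the number of tuples `(b_τ)_{τ ∈ T}` with
entries in `{1, …, (p-1)/2}` satisfying conditions (i)–(iv) is at most `K·2^{K-1}`,
`K = |T|`. Tuples are encoded as functions `ZMod (p^n) → ℕ` equal to `1` off `T`. -/
theorem counting_argument (p n : ℕ) (hp : p.Prime) (hodd : Odd p) (hn : 2 ≤ n)
    (T : Finset (ZMod (p ^ n))) (hT : T.Nonempty)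
    (hdist : Set.InjOn (fun τ : ZMod (p ^ n) => ((ZMod.val τ : ZMod p))) (T : Set (ZMod (p ^ n))))
    (l : ZMod (p ^ n) → ℤ) (hlbd : ∀ τ ∈ T, |l τ| < (p : ℤ))
    (hlne : ∃ τ ∈ T, l τ ≠ 0) (w : ZMod p) :
    ({b : ZMod (p ^ n) → ℕ |
        (∀ τ ∈ T, 1 ≤ b τ ∧ b τ ≤ (p - 1) / 2) ∧ (∀ τ ∉ T, b τ = 1) ∧
        (∀ τ ∈ T, ∀ τ' ∈ T,
          ((b τ : ZMod p)) ^ 2 - (ZMod.val τ : ZMod p)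
            = ((b τ' : ZMod p)) ^ 2 - (ZMod.val τ' : ZMod p)) ∧
        (∀ τ ∈ T, ((b τ : ZMod p)) ^ 2 - (ZMod.val τ : ZMod p) ≠ 0) ∧
        (∑ τ ∈ T, (l τ : ZMod p) * ((b τ : ZMod p))⁻¹ = w) ∧
        (∀ j : ℕ, 2 ≤ j → j ≤ n - 1 →
          ∑ τ ∈ T, (l τ : ZMod p) * (((b τ : ZMod p))⁻¹) ^ (2 * j - 1) = 0)} : Set _).Finite ∧
    ({b : ZMod (p ^ n) → ℕ |
        (∀ τ ∈ T, 1 ≤ b τ ∧ b τ ≤ (p - 1) / 2) ∧ (∀ τ ∉ T, b τ = 1) ∧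
        (∀ τ ∈ T, ∀ τ' ∈ T,
          ((b τ : ZMod p)) ^ 2 - (ZMod.val τ : ZMod p)
            = ((b τ' : ZMod p)) ^ 2 - (ZMod.val τ' : ZMod p)) ∧
        (∀ τ ∈ T, ((b τ : ZMod p)) ^ 2 - (ZMod.val τ : ZMod p) ≠ 0) ∧
        (∑ τ ∈ T, (l τ : ZMod p) * ((b τ : ZMod p))⁻¹ = w) ∧
        (∀ j : ℕ, 2 ≤ j → j ≤ n - 1 →
          ∑ τ ∈ T, (l τ : ZMod p) * (((b τ : ZMod p))⁻¹) ^ (2 * j - 1) = 0)} : Set _).ncard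
      ≤ T.card * 2 ^ (T.card - 1) := by
  have := Fact.mk hp
  obtain ⟨τ₀, hτ₀⟩ := hT
  have hl : ∃ k : T, ((l k : ℤ) : ZMod p) ≠ 0 := by
    obtain ⟨τ, hτ, hne⟩ := hlne
    refine ⟨⟨τ, hτ⟩, fun h => hne ?_⟩
    exact Int.eq_zero_of_abs_lt_dvd ((ZMod.intCast_zmod_eq_zero_iff_dvd _ _).1 h) (hlbd τ hτ)
  obtain ⟨hfin, hcard⟩ := finite_and_ncard_sqrt_relation_le
    (fun τ : T => ((ZMod.val (τ : ZMod (p ^ n)) : ℕ) : ZMod p)) (fun τ : T => (l τ : ZMod p)) w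
    (fun τ τ' h => Subtype.ext (hdist τ.2 τ'.2 h)) hl
  rw [Fintype.card_coe] at hcard
  set S : Set (ZMod (p ^ n) → ℕ) := {b | _}
  set R : Set (ZMod p) := {x | ∃ s, _}
  let f : (ZMod (p ^ n) → ℕ) → ZMod p := fun b => (b τ₀ : ZMod p) ^ 2 - (ZMod.val τ₀ : ZMod p)
  have hmaps : Set.MapsTo f S R := by
    rintro b ⟨hb, -, hconst, -, hw, -⟩
    refine ⟨fun τ => (b τ : ZMod p), fun τ => natCast_ne_zero_of_le_half hp (hb τ τ.2),
      fun τ => ?_, ?_⟩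
    · linear_combination hconst τ τ.2 τ₀ hτ₀
    · rw [← hw]
      exact Finset.sum_coe_sort T (fun τ => (l τ : ZMod p) * ((b τ : ZMod p))⁻¹)
  have hinj : Set.InjOn f S := by
    rintro b ⟨hb, hboff, hbconst, -⟩ c ⟨hc, hcoff, hcconst, -⟩ hbc
    funext τ
    by_cases hτ : τ ∈ T
    · refine eq_of_sq_eq_of_le_half hp (hb τ hτ) (hc τ hτ) ?_
      linear_combination hbc + hbconst τ hτ τ₀ hτ₀ - hcconst τ hτ τ₀ hτ₀
    · rw [hboff τ hτ, hcoff τ hτ]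
  exact ⟨Set.Finite.of_injOn hmaps hinj hfin,
    (Set.ncard_le_ncard_of_injOn f hmaps hinj hfin).trans hcard⟩

end
end

section
/- There is an absolute constant C > 0 such that the following holds. Let p be an odd prime, n ≥ 1 an integer, and T a finite subset of ℤ/p^nℤ; let k be the number of distinct reductions modulo p of the elements of T. Let A := {a ∈ (ℤ/p^nℤ)^× : for every τ ∈ T, a + τ is the square of a unit of ℤ/p^nℤ}. Then | |A| − φ(p^n)/2^k | ≤ C·k·φ(p^n)/p^{1/2}. -/
open scoped BigOperators
open Filter MeasureTheory

noncomputable section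

section QuadraticCharacterSums

open Polynomial

/-- The operator `P ↦ P_k` for which the `k`-th derivative of `f ^ e * P` is `f ^ (e - k) * P_k`. -/
def powTwistedDerivative {R : Type*} [CommRing R] (f : R[X]) (e : ℕ) :
    ℕ → (R[X] →ₗ[R] R[X])
  | 0 => LinearMap.id
  | k + 1 => (LinearMap.mulLeft R (((e - k : ℕ) : R[X]) * derivative f) +
      LinearMap.mulLeft R f ∘ₗ derivative) ∘ₗ powTwistedDerivative f e k

theorem iterate_derivative_pow_mul_mul_pow_char {R : Type*} [CommRing R] (p : ℕ) [CharP R p]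
    (f : R[X]) (e k : ℕ) (hk : k ≤ e) (P Q : R[X]) :
    derivative^[k] (f ^ e * P * Q ^ p) =
      f ^ (e - k) * powTwistedDerivative f e k P * Q ^ p := by
  induction k with
  | zero => simp [powTwistedDerivative]
  | succ k ih =>
    obtain ⟨d, rfl⟩ : ∃ d, e = d + k + 1 := ⟨e - k - 1, by omega⟩
    rw [Function.iterate_succ_apply', ih (by omega)]
    have h1 : d + k + 1 - k = d + 1 := by omega
    have h2 : d + k + 1 - (k + 1) = d := by omega
    have hp : (C (p : R) : R[X]) = 0 := by simp
    simp only [powTwistedDerivative, h1, h2, derivative_mul, derivative_pow, LinearMap.comp_apply,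
      LinearMap.add_apply, LinearMap.mulLeft_apply, hp, Nat.add_sub_cancel]
    simp only [map_natCast]
    ring

theorem natDegree_powTwistedDerivative_le {R : Type*} [CommRing R] (f : R[X]) (e k : ℕ)
    (P : R[X]) :
    (powTwistedDerivative f e k P).natDegree ≤ P.natDegree + k * f.natDegree := by
  induction k with
  | zero => simp [powTwistedDerivative]
  | succ k ih =>
    simp only [powTwistedDerivative, LinearMap.comp_apply,
      LinearMap.add_apply, LinearMap.mulLeft_apply]
    set Q := powTwistedDerivative f e k P
    refine (natDegree_add_le _ _).trans (max_le ?_ ?_)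
    · refine natDegree_mul_le.trans ?_
      have h1 := natDegree_mul_le (p := ((e - k : ℕ) : R[X])) (q := derivative f)
      have h2 := natDegree_derivative_le f
      rw [natDegree_natCast] at h1
      rw [add_mul]
      omega
    · refine natDegree_mul_le.trans ?_
      have h2 := natDegree_derivative_le Q
      rw [add_mul]
      omega

theorem exists_auxiliary_family {F : Type*} [Field F] (f : F[X]) (a : F) (e₁ e₂ l J D : ℕ)
    (h : l * (D + l * f.natDegree + J) < 2 * (J * D)) :
    ∃ r s : Fin J → F[X], ¬ (r = 0 ∧ s = 0) ∧
      (∀ j, (r j).degree < D) ∧ (∀ j, (s j).degree < D) ∧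
      ∀ k < l, ∑ j, (powTwistedDerivative f e₁ k (r j) +
        C a * powTwistedDerivative f e₂ k (s j)) * X ^ (j : ℕ) = 0 := by
  set M := D + l * f.natDegree + J
  let Φ : ((Fin J → degreeLT F D) × (Fin J → degreeLT F D)) →ₗ[F] (Fin l × Fin M → F) :=
    { toFun := fun v q => (∑ j, (powTwistedDerivative f e₁ q.1 (v.1 j : F[X]) +
        C a * powTwistedDerivative f e₂ q.1 (v.2 j : F[X])) * X ^ (j : ℕ)).coeff q.2
      map_add' := fun v w => by
        ext q
        simp only [Pi.add_apply, ← coeff_add, ← Finset.sum_add_distrib]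
        congr 1
        refine Finset.sum_congr rfl fun j _ => ?_
        simp only [Prod.fst_add, Prod.snd_add, Pi.add_apply, Submodule.coe_add, map_add]
        ring
      map_smul' := fun c v => by
        ext q
        simp only [Pi.smul_apply, ← coeff_smul, Finset.smul_sum, RingHom.id_apply]
        congr 1
        refine Finset.sum_congr rfl fun j _ => ?_
        simp only [Prod.smul_fst, Prod.smul_snd, Pi.smul_apply, Submodule.coe_smul, map_smul]
        simp only [smul_eq_C_mul]
        ring }
  have : Module.Finite F (degreeLT F D) := Module.Finite.equiv (degreeLTEquiv F D).symm
  have hD : Module.finrank F (degreeLT F D) = D := by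
    rw [(degreeLTEquiv F D).finrank_eq]; simp
  have hker : LinearMap.ker Φ ≠ ⊥ := by
    apply LinearMap.ker_ne_bot_of_finrank_lt
    rw [Module.finrank_prod, Module.finrank_fintype_fun_eq_card, Module.finrank_pi_fintype]
    simp only [hD, Fintype.card_prod, Fintype.card_fin, Finset.sum_const, Finset.card_univ,
      smul_eq_mul]
    omega
  obtain ⟨v, hv, hv0⟩ := (Submodule.ne_bot_iff _).1 hker
  refine ⟨fun j => v.1 j, fun j => v.2 j, ?_, fun j => mem_degreeLT.1 (v.1 j).2,
    fun j => mem_degreeLT.1 (v.2 j).2, fun k hk => ?_⟩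
  · rintro ⟨h1, h2⟩
    refine hv0 (Prod.ext ?_ ?_) <;> ext1 j
    · exact Subtype.ext (congrFun h1 j)
    · exact Subtype.ext (congrFun h2 j)
  · have hdeg : ∀ (e : ℕ) (P : degreeLT F D), (powTwistedDerivative f e k (P : F[X])).natDegree ≤
        D + l * f.natDegree := fun e P => by
      have h1 := natDegree_le_of_degree_le (mem_degreeLT.1 P.2).le
      have h2 := Nat.mul_le_mul_right f.natDegree hk.le
      exact (natDegree_powTwistedDerivative_le f e k P).trans (by omega)
    ext i
    by_cases hi : i < M
    · exact congrFun (LinearMap.mem_ker.1 hv) (⟨k, hk⟩, ⟨i, hi⟩)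
    · rw [finsetSum_coeff, coeff_zero]
      refine Finset.sum_eq_zero fun j _ => coeff_eq_zero_of_natDegree_lt ?_
      refine lt_of_le_of_lt natDegree_mul_le ?_
      have h1 := natDegree_add_le (powTwistedDerivative f e₁ k (v.1 j : F[X]))
        (C a * powTwistedDerivative f e₂ k (v.2 j : F[X]))
      have h2 := natDegree_C_mul_le a (powTwistedDerivative f e₂ k (v.2 j : F[X]))
      have h3 := hdeg e₁ (v.1 j)
      have h4 := hdeg e₂ (v.2 j)
      have h5 := j.2
      rw [natDegree_X_pow]
      have h6 := h1.trans (max_le h3 (h2.trans h4))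
      dsimp only
      omega

theorem eq_zero_of_sum_add_mul_pow_eq_zero {p : ℕ} [Fact p.Prime] (hp2 : p ≠ 2)
    (f : (ZMod p)[X]) (hf0 : f.eval 0 ≠ 0) (hodd : ∃ x, Odd (f.rootMultiplicity x)) {D : ℕ}
    (hD : 2 * D + f.natDegree ≤ p + 1) {J : ℕ} (r s : Fin J → (ZMod p)[X])
    (hr : ∀ j, (r j).degree < D) (hs : ∀ j, (s j).degree < D)
    (h : ∑ j, (r j + s j * f ^ (p / 2)) * X ^ (p * j : ℕ) = 0) : r = 0 ∧ s = 0 := by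
  induction J with
  | zero => exact ⟨Subsingleton.elim _ _, Subsingleton.elim _ _⟩
  | succ J ih =>
    have hf : f ≠ 0 := by rintro rfl; simp at hf0
    have hpp : 2 * (p / 2) + 1 = p := by
      have := (Fact.out : p.Prime).eq_two_or_odd
      omega
    have hfp : ∃ q, f ^ p = C (f.eval 0) + X ^ p * q := by
      obtain ⟨q, hq⟩ := X_sub_C_dvd_sub_C_eval (p := f) (a := 0)
      rw [C_0, sub_zero, sub_eq_iff_eq_add'] at hq
      refine ⟨q ^ p, ?_⟩
      conv_lhs => rw [hq]
      rw [add_pow_char, mul_pow, ← C_pow, ZMod.pow_card]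
    have hsplit : ∀ t : Fin (J + 1) → (ZMod p)[X], ∑ j, t j * X ^ (p * j : ℕ) =
        t 0 + X ^ p * ∑ j : Fin J, t j.succ * X ^ (p * j : ℕ) := fun t => by
      rw [Fin.sum_univ_succ, Finset.mul_sum]
      simp only [Fin.val_zero, mul_zero, pow_zero, mul_one, Fin.val_succ]
      congr 1
      refine Finset.sum_congr rfl fun j _ => ?_
      ring
    have h0 : r 0 = 0 ∧ s 0 = 0 := by
      have hdvd : X ^ p ∣ r 0 ^ 2 * f - C (f.eval 0) * s 0 ^ 2 := by
        rw [hsplit] at h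
        set U := ∑ j : Fin J, (r j.succ + s j.succ * f ^ (p / 2)) * X ^ (p * j : ℕ)
        obtain ⟨q, hq⟩ := hfp
        have hr0 : r 0 = -(s 0 * f ^ (p / 2)) - X ^ p * U := by linear_combination h
        refine ⟨s 0 ^ 2 * q + f * (2 * s 0 * f ^ (p / 2) * U + X ^ p * U ^ 2), ?_⟩
        have hg : f * (f ^ (p / 2)) ^ 2 = C (f.eval 0) + X ^ p * q := by
          rw [← hq, ← pow_mul, ← pow_succ', mul_comm, hpp]
        rw [hr0]
        linear_combination s 0 ^ 2 * hg
      have hnd : ∀ t : (ZMod p)[X], t.degree < D → t ≠ 0 → t.natDegree < D := fun t ht h0 =>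
        (natDegree_lt_iff_degree_lt h0).2 ht
      have heq : r 0 ^ 2 * f = C (f.eval 0) * s 0 ^ 2 := by
        rw [← sub_eq_zero]
        refine eq_zero_of_dvd_of_degree_lt hdvd ?_
        rw [degree_X_pow]
        have hpos : 0 < p := (Fact.out : p.Prime).pos
        refine lt_of_le_of_lt (degree_sub_le _ _) (max_lt ?_ ?_)
        · by_cases hr0 : r 0 = 0
          · simp [hr0]
          rw [← natDegree_lt_iff_degree_lt (by simp [hr0, hf])]
          have := hnd _ (hr 0) hr0
          rw [natDegree_mul (by simp [hr0]) hf, natDegree_pow]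
          omega
        · by_cases hs0 : s 0 = 0
          · simp [hs0]
          rw [← natDegree_lt_iff_degree_lt (by simp [hs0, hf0])]
          have := hnd _ (hs 0) hs0
          rw [natDegree_C_mul hf0, natDegree_pow]
          omega
      by_cases hr0 : r 0 = 0
      · refine ⟨hr0, ?_⟩
        simpa [hr0, hf0] using heq
      · exfalso
        have hs0 : s 0 ≠ 0 := by
          intro hs0
          simp [hs0, hr0, hf] at heq
        obtain ⟨x, hx⟩ := hodd
        have := congrArg (rootMultiplicity x) heq
        rw [rootMultiplicity_mul (by simp [hr0, hf]), rootMultiplicity_mul (by simp [hs0, hf0]),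
          rootMultiplicity_C, ← count_roots, ← count_roots, ← count_roots, roots_pow, roots_pow,
          Multiset.count_nsmul, Multiset.count_nsmul, count_roots, count_roots, count_roots] at this
        obtain ⟨y, hy⟩ := hx
        omega
    rw [hsplit, h0.1, h0.2] at h
    have h' : ∑ j : Fin J, (r j.succ + s j.succ * f ^ (p / 2)) * X ^ (p * j : ℕ) = 0 := by
      simpa using h
    obtain ⟨ih1, ih2⟩ := ih (fun j => r j.succ) (fun j => s j.succ) (fun j => hr _)
      (fun j => hs _) h'
    constructor <;> ext1 j <;> refine Fin.cases ?_ (fun i => ?_) j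
    · exact h0.1
    · exact congrFun ih1 i
    · exact h0.2
    · exact congrFun ih2 i

theorem card_filter_eval_pow_eq_mul_le {p : ℕ} [Fact p.Prime] (hp2 : p ≠ 2)
    (f : (ZMod p)[X]) (hf0 : f.eval 0 ≠ 0) (hodd : ∃ x, Odd (f.rootMultiplicity x)) (a : ZMod p)
    {l J D : ℕ} (hl : l < p) (hD : 2 * D + f.natDegree ≤ p + 1)
    (h : l * (D + l * f.natDegree + J) < 2 * (J * D)) :
    (Finset.univ.filter fun x => f.eval x ^ (p / 2) = a).card * l ≤
      l * f.natDegree + (p / 2) * f.natDegree + D + p * J := by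
  obtain ⟨r, s, hne, hr, hs, hrs⟩ := exists_auxiliary_family f a l (l + p / 2) l J D h
  have hf : f ≠ 0 := by rintro rfl; simp at hf0
  set G := ∑ j, (r j + s j * f ^ (p / 2)) * X ^ (p * j : ℕ) with hG
  have hG0 : G ≠ 0 := fun h0 =>
    hne (eq_zero_of_sum_add_mul_pow_eq_zero hp2 f hf0 hodd hD r s hr hs h0)
  set R := f ^ l * G with hR
  have hR0 : R ≠ 0 := mul_ne_zero (pow_ne_zero _ hf) hG0
  have hR' : R = ∑ j, (f ^ l * r j * (X ^ (j : ℕ)) ^ p +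
      f ^ (l + p / 2) * s j * (X ^ (j : ℕ)) ^ p) := by
    rw [hR, hG, Finset.mul_sum]
    refine Finset.sum_congr rfl fun j _ => ?_
    rw [← pow_mul, mul_comm (j : ℕ) p]
    ring
  have hdegG : G.natDegree ≤ D + (p / 2) * f.natDegree + p * J := by
    refine natDegree_sum_le_of_forall_le _ _ fun j _ => ?_
    have h1 := natDegree_le_of_degree_le (hr j).le
    have h2 := natDegree_le_of_degree_le (hs j).le
    have h3 := natDegree_mul_le (p := s j) (q := f ^ (p / 2))
    rw [natDegree_pow] at h3
    have h4 := natDegree_add_le (r j) (s j * f ^ (p / 2))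
    have h5 : p * (j : ℕ) ≤ p * J := Nat.mul_le_mul_left _ j.2.le
    refine natDegree_mul_le.trans ?_
    rw [natDegree_X_pow]
    omega
  have hdegR : R.natDegree ≤ l * f.natDegree + (p / 2) * f.natDegree + D + p * J := by
    have h1 := natDegree_mul_le (p := f ^ l) (q := G)
    rw [natDegree_pow, ← hR] at h1
    omega
  have hmult : ∀ x, f.eval x ^ (p / 2) = a → l ≤ R.rootMultiplicity x := by
    intro x hx
    rcases Nat.eq_zero_or_pos l with rfl | hlpos
    · exact Nat.zero_le _
    have hlt : l - 1 < R.rootMultiplicity x := by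
      apply lt_rootMultiplicity_of_isRoot_iterate_derivative_of_mem_nonZeroDivisors' hR0
      · intro k hk
        have hkl : k < l := by omega
        have hsub : l + p / 2 - k = (l - k) + p / 2 := by omega
        rw [IsRoot, hR', iterate_derivative_sum, eval_finsetSum]
        have h1 := congrArg (fun P => f.eval x ^ (l - k) * eval x P) (hrs k hkl)
        simp only [eval_zero, mul_zero, eval_finsetSum, Finset.mul_sum] at h1
        rw [← h1]
        refine Finset.sum_congr rfl fun j _ => ?_
        rw [iterate_map_add, iterate_derivative_pow_mul_mul_pow_char p f l k hkl.le,
          iterate_derivative_pow_mul_mul_pow_char p f (l + p / 2) k (by omega), hsub]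
        simp only [eval_add, eval_mul, eval_pow, eval_X, eval_C, ZMod.pow_card, pow_add, hx]
        ring
      · intro k hk hk0
        rw [mem_nonZeroDivisors_iff_ne_zero, Ne, ZMod.natCast_eq_zero_iff]
        exact fun hdvd => hk0 (Nat.eq_zero_of_dvd_of_lt hdvd (by omega))
    omega
  set S := Finset.univ.filter fun x => f.eval x ^ (p / 2) = a
  have hroots : l • S.val ≤ R.roots := by
    rw [Multiset.le_iff_count]
    intro x
    rw [Multiset.count_nsmul, count_roots]
    by_cases hx : x ∈ S
    · rw [Multiset.count_eq_one_of_mem S.nodup hx, mul_one]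
      exact hmult x (Finset.mem_filter.1 hx).2
    · rw [Multiset.count_eq_zero_of_notMem hx]
      simp
  have hcard := (Multiset.card_le_card hroots).trans (card_roots' R)
  rw [Multiset.card_nsmul, Finset.card_val, mul_comm] at hcard
  exact hcard.trans hdegR

theorem card_filter_eval_pow_eq_le {p : ℕ} [Fact p.Prime] (hp2 : p ≠ 2)
    (f : (ZMod p)[X]) (hf0 : f.eval 0 ≠ 0) (hodd : ∃ x, Odd (f.rootMultiplicity x)) (a : ZMod p)
    (hm : 1 ≤ f.natDegree) (hmp : 20 * f.natDegree ≤ p.sqrt) :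
    ((Finset.univ.filter fun x => f.eval x ^ (p / 2) = a).card : ℝ) ≤
      p / 2 + 7 * f.natDegree * √p := by
  set m := f.natDegree with hmdef
  set w := p.sqrt
  have hw : w * w ≤ p := Nat.sqrt_le p
  set h := w / 2
  have hhm : 10 * m ≤ h := by omega
  have h4 : 4 * (h * h) ≤ p := by
    have h1 : 2 * h ≤ w := by omega
    nlinarith [Nat.mul_le_mul h1 h1]
  have hlp : 2 * h < p := by nlinarith
  have hmain := card_filter_eval_pow_eq_mul_le hp2 f hf0 hodd a (l := 2 * h) (J := h + 2 * m + 2)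
    (D := (p - m) / 2) hlp (by omega) (by
      rw [← hmdef]
      set D := (p - m) / 2
      have hDlow : p ≤ 2 * D + m + 1 := by omega
      nlinarith [Nat.mul_le_mul hhm hhm, Nat.mul_le_mul hDlow (le_refl (m + 1)),
        Nat.mul_le_mul h4 (le_refl (m + 1)), Nat.mul_le_mul hhm (le_refl h),
        Nat.mul_le_mul hhm (le_refl m),
        Nat.mul_le_mul (Nat.mul_le_mul hhm (le_refl h)) (le_refl m)])
  rw [← hmdef] at hmain
  set N := (Finset.univ.filter fun x => f.eval x ^ (p / 2) = a).card
  have hq2 : √(p : ℝ) * √p = p := Real.mul_self_sqrt (Nat.cast_nonneg p)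
  set q := √(p : ℝ)
  have hqw : q ≤ 2 * h + 2 := by
    have h1 : p < (w + 1) * (w + 1) := Nat.lt_succ_sqrt p
    have h2 : w + 1 ≤ 2 * h + 2 := by omega
    have h3 : q ≤ ((w + 1 : ℕ) : ℝ) := by
      apply Real.sqrt_le_iff.2 ⟨by positivity, ?_⟩
      rw [sq]
      exact_mod_cast h1.le
    exact h3.trans (by exact_mod_cast h2)
  have hmR : (1 : ℝ) ≤ m := by exact_mod_cast hm
  have hhR : (10 : ℝ) * m ≤ h := by exact_mod_cast hhm
  have hq0 : 0 ≤ q := Real.sqrt_nonneg _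
  have hqh : 2 * (h : ℝ) ≤ q := by
    apply Real.le_sqrt_of_sq_le
    have : (4 : ℝ) * (h * h) ≤ p := by exact_mod_cast h4
    nlinarith
  have hmainR : (N : ℝ) * (2 * h) ≤
      2 * h * m + p / 2 * m + p / 2 + p * (h + 2 * m + 2) := by
    have h1 : ((p / 2 : ℕ) : ℝ) ≤ p / 2 := Nat.cast_div_le
    have h2 : (((p - m) / 2 : ℕ) : ℝ) ≤ p / 2 :=
      (Nat.cast_le.2 (by omega : (p - m) / 2 ≤ p / 2)).trans h1
    have h3 : (N : ℝ) * (2 * h) ≤ 2 * h * m + ((p / 2 : ℕ) : ℝ) * m + (((p - m) / 2 : ℕ) : ℝ) +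
        p * (h + 2 * m + 2) := by exact_mod_cast hmain
    have h4 := mul_le_mul_of_nonneg_right h1 (Nat.cast_nonneg (α := ℝ) m)
    linarith
  have hpos : (0 : ℝ) < 2 * h := by linarith
  refine le_of_mul_le_mul_right (hmainR.trans ?_) hpos
  have h5 : (p : ℝ) * (5 * m) ≤ 6 * m * q * (2 * h) := by
    rw [← hq2]
    have : 5 * q ≤ 6 * (2 * h) := by linarith
    nlinarith [mul_le_mul_of_nonneg_left this (mul_nonneg hq0 (Nat.cast_nonneg (α := ℝ) m))]
  have h6 : (p : ℝ) * 1 ≤ p * m := mul_le_mul_of_nonneg_left hmR (Nat.cast_nonneg p)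
  have h7 : 1 * (m * (2 * h)) ≤ q * ((m : ℝ) * (2 * h)) :=
    mul_le_mul_of_nonneg_right (by linarith) (by positivity)
  nlinarith

theorem abs_sum_quadraticChar_eval_le {p : ℕ} [Fact p.Prime] (hp2 : p ≠ 2)
    (f : (ZMod p)[X]) (hf0 : f.eval 0 ≠ 0) (hodd : ∃ x, Odd (f.rootMultiplicity x))
    (hm : 1 ≤ f.natDegree) (hmp : 20 * f.natDegree ≤ p.sqrt) :
    |∑ x, ((quadraticChar (ZMod p) (f.eval x) : ℤ) : ℝ)| ≤ 15 * f.natDegree * √p := by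
  have hf : f ≠ 0 := by rintro rfl; simp at hf0
  have hchar : ringChar (ZMod p) ≠ 2 := by rwa [ZMod.ringChar_zmod_n]
  have hbound : ∀ ε : ℤ, ((Finset.univ.filter fun x =>
      quadraticChar (ZMod p) (f.eval x) = ε).card : ℝ) ≤ p / 2 + 7 * f.natDegree * √p := by
    intro ε
    refine le_trans ?_ (card_filter_eval_pow_eq_le hp2 f hf0 hodd (ε : ZMod p) hm hmp)
    refine Nat.cast_le.2 (Finset.card_le_card fun x hx => ?_)
    rw [Finset.mem_filter] at hx ⊢
    refine ⟨hx.1, ?_⟩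
    rw [← hx.2, quadraticChar_eq_pow_of_char_ne_two' hchar, ZMod.card]
  have hzero : ((Finset.univ.filter fun x =>
      quadraticChar (ZMod p) (f.eval x) = 0).card : ℝ) ≤ f.natDegree := by
    refine Nat.cast_le.2 (le_trans ?_ (card_roots' f))
    refine le_trans (Finset.card_le_card fun x hx => ?_) (Multiset.toFinset_card_le f.roots)
    rw [Finset.mem_filter, quadraticChar_eq_zero_iff] at hx
    rw [Multiset.mem_toFinset, mem_roots hf]
    exact hx.2
  have htri : ∀ x, quadraticChar (ZMod p) (f.eval x) = 0 ∨
      quadraticChar (ZMod p) (f.eval x) = 1 ∨ quadraticChar (ZMod p) (f.eval x) = -1 := by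
    intro x
    by_cases hx : f.eval x = 0
    · left; rw [hx, quadraticChar_zero]
    · right; exact quadraticChar_dichotomy hx
  have hsum : ∑ x, ((quadraticChar (ZMod p) (f.eval x) : ℤ) : ℝ) =
      (Finset.univ.filter fun x => quadraticChar (ZMod p) (f.eval x) = 1).card -
      (Finset.univ.filter fun x => quadraticChar (ZMod p) (f.eval x) = -1).card := by
    simp only [Finset.card_filter, Nat.cast_sum, ← Finset.sum_sub_distrib]
    refine Finset.sum_congr rfl fun x _ => ?_
    rcases htri x with h | h | h <;> rw [h] <;> norm_num
  have hcard : (p : ℝ) =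
      (Finset.univ.filter fun x => quadraticChar (ZMod p) (f.eval x) = 0).card +
      (Finset.univ.filter fun x => quadraticChar (ZMod p) (f.eval x) = 1).card +
      (Finset.univ.filter fun x => quadraticChar (ZMod p) (f.eval x) = -1).card := by
    simp only [Finset.card_filter, Nat.cast_sum, ← Finset.sum_add_distrib]
    have h1 : (p : ℝ) = ∑ _x : ZMod p, (1 : ℝ) := by simp [ZMod.card]
    rw [h1]
    refine Finset.sum_congr rfl fun x _ => ?_
    rcases htri x with h | h | h <;> rw [h] <;> norm_num
  have hq : 1 ≤ √(p : ℝ) :=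
    Real.one_le_sqrt.2 (by exact_mod_cast (Fact.out : p.Prime).one_le)
  have h7 : (f.natDegree : ℝ) * 1 ≤ f.natDegree * √p :=
    mul_le_mul_of_nonneg_left hq (Nat.cast_nonneg _)
  have h1 := hbound 1
  have h2 := hbound (-1)
  rw [hsum, abs_le]
  constructor <;> linarith

theorem abs_sum_prod_quadraticChar_add_le {p : ℕ} [Fact p.Prime] (hp2 : p ≠ 2)
    (S : Finset (ZMod p)) (hS : S.Nonempty) :
    |∑ x, ∏ t ∈ S, ((quadraticChar (ZMod p) (x + t) : ℤ) : ℝ)| ≤ 20 * S.card * √p := by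
  have hm : 1 ≤ S.card := hS.card_pos
  have hq2 : √(p : ℝ) * √p = p := Real.mul_self_sqrt (Nat.cast_nonneg p)
  have hq0 : 0 ≤ √(p : ℝ) := Real.sqrt_nonneg _
  by_cases hmp : 20 * S.card ≤ p.sqrt
  · obtain ⟨b, hb⟩ : ∃ b, b ∉ S.image fun t => -t := by
      by_contra! hall
      have h1 : (Finset.univ : Finset (ZMod p)).card ≤ (S.image fun t => -t).card :=
        Finset.card_le_card fun x _ => hall x
      rw [Finset.card_univ, ZMod.card] at h1
      have h2 := Finset.card_image_le (s := S) (f := fun t => -t)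
      have h3 := Nat.sqrt_le_self p
      omega
    have hbS : ∀ t ∈ S, b + t ≠ 0 := fun t ht h0 =>
      hb (Finset.mem_image.2 ⟨t, ht, by linear_combination -h0⟩)
    set f : (ZMod p)[X] := ∏ t ∈ S, (X - C (-(b + t))) with hf
    have hdeg : f.natDegree = S.card := by
      rw [hf, natDegree_finsetProd_X_sub_C_eq_card]
    have heval : ∀ x, f.eval x = ∏ t ∈ S, (x + b + t) := fun x => by
      rw [hf, eval_prod]
      refine Finset.prod_congr rfl fun t _ => ?_
      simp only [eval_sub, eval_X, eval_C]
      ring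
    have hf0 : f.eval 0 ≠ 0 := by
      rw [heval, Finset.prod_ne_zero_iff]
      intro t ht
      rw [zero_add]
      exact hbS t ht
    have hodd : ∃ x, Odd (f.rootMultiplicity x) := by
      obtain ⟨t, ht⟩ := hS
      refine ⟨-(b + t), ?_⟩
      have hroots : f.roots = S.val.map fun t => -(b + t) := by
        have h1 : f = ((S.val.map fun t => -(b + t)).map fun a => X - C a).prod := by
          rw [Multiset.map_map]; rfl
        rw [h1, roots_multiset_prod_X_sub_C]
      have hinj : Function.Injective fun t : ZMod p => -(b + t) := fun x y hxy => by simpa using hxy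
      rw [← count_roots, hroots, Multiset.count_map_eq_count' _ _ hinj,
        Multiset.count_eq_one_of_mem S.nodup ht]
      exact odd_one
    have hmain := abs_sum_quadraticChar_eval_le hp2 f hf0 hodd (by rwa [hdeg]) (by rwa [hdeg])
    rw [hdeg] at hmain
    rw [← Equiv.sum_comp (Equiv.addRight b)]
    simp only [heval, map_prod, Int.cast_prod, Equiv.coe_addRight] at hmain ⊢
    refine hmain.trans ?_
    have : (0 : ℝ) ≤ S.card * √p := by positivity
    linarith
  · have hq : √(p : ℝ) ≤ 20 * S.card := by
      have h1 : p < (p.sqrt + 1) * (p.sqrt + 1) := Nat.lt_succ_sqrt p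
      have h2 : p.sqrt + 1 ≤ 20 * S.card := by omega
      apply Real.sqrt_le_iff.2 ⟨by positivity, ?_⟩
      have h3 : p ≤ (20 * S.card) ^ 2 := by nlinarith
      exact_mod_cast h3
    have htriv : |∑ x, ∏ t ∈ S, ((quadraticChar (ZMod p) (x + t) : ℤ) : ℝ)| ≤ p := by
      refine (Finset.abs_sum_le_sum_abs _ _).trans ?_
      have h1 : (p : ℝ) = ∑ _x : ZMod p, (1 : ℝ) := by simp [ZMod.card]
      rw [h1]
      refine Finset.sum_le_sum fun x _ => ?_
      rw [Finset.abs_prod]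
      refine Finset.prod_le_one (fun _ _ => abs_nonneg _) fun t _ => ?_
      by_cases hx : x + t = 0
      · simp [hx]
      · rcases quadraticChar_dichotomy hx with h | h <;> simp [h]
    nlinarith

theorem abs_card_filter_quadraticChar_add_eq_one_sub_le {p : ℕ} [Fact p.Prime] (hp2 : p ≠ 2)
    (T : Finset (ZMod p)) (hT : T.Nonempty) :
    |((Finset.univ.filter fun x : ZMod p =>
        x ≠ 0 ∧ ∀ t ∈ T, quadraticChar (ZMod p) (x + t) = 1).card : ℝ) - p / 2 ^ T.card| ≤
      22 * T.card * √p := by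
  classical
  set k := T.card
  have hk : (1 : ℝ) ≤ k := by exact_mod_cast hT.card_pos
  have hq : 1 ≤ √(p : ℝ) :=
    Real.one_le_sqrt.2 (by exact_mod_cast (Fact.out : p.Prime).one_le)
  set P : ZMod p → ℝ := fun x => ∏ t ∈ T, (1 + ((quadraticChar (ZMod p) (x + t) : ℤ) : ℝ)) with hP
  set A := Finset.univ.filter fun x : ZMod p =>
    x ≠ 0 ∧ ∀ t ∈ T, quadraticChar (ZMod p) (x + t) = 1
  set B := insert 0 (T.image fun t => -t) with hB
  have h2k : (0 : ℝ) < 2 ^ k := by positivity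
  have hP0 : ∀ x, 0 ≤ P x ∧ P x ≤ 2 ^ k := by
    intro x
    have hfac : ∀ t, 0 ≤ 1 + ((quadraticChar (ZMod p) (x + t) : ℤ) : ℝ) ∧
        1 + ((quadraticChar (ZMod p) (x + t) : ℤ) : ℝ) ≤ 2 := by
      intro t
      by_cases hx : x + t = 0
      · simp [hx]
      · rcases quadraticChar_dichotomy hx with h | h <;> rw [h] <;> norm_num
    refine ⟨Finset.prod_nonneg fun t _ => (hfac t).1, ?_⟩
    refine (Finset.prod_le_prod (fun t _ => (hfac t).1) fun t _ => (hfac t).2).trans ?_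
    rw [Finset.prod_const]
  have hpt : ∀ x, |(if x ∈ A then (2 : ℝ) ^ k else 0) - P x| ≤ if x ∈ B then 2 ^ k else 0 := by
    intro x
    obtain ⟨h0, h1⟩ := hP0 x
    by_cases hxB : x ∈ B
    · rw [if_pos hxB, abs_le]
      split_ifs <;> constructor <;> linarith
    · rw [if_neg hxB]
      have hx0 : x ≠ 0 := fun h => hxB (by simp [hB, h])
      have hxt : ∀ t ∈ T, x + t ≠ 0 := fun t ht h => hxB (by
        rw [hB, Finset.mem_insert, Finset.mem_image]
        exact Or.inr ⟨t, ht, by linear_combination -h⟩)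
      refine le_of_eq (abs_eq_zero.2 (sub_eq_zero.2 ?_))
      by_cases hall : ∀ t ∈ T, quadraticChar (ZMod p) (x + t) = 1
      · rw [if_pos (Finset.mem_filter.2 ⟨Finset.mem_univ _, hx0, hall⟩), hP]
        simp only
        rw [Finset.prod_congr rfl fun t ht => by rw [hall t ht], Finset.prod_const]
        norm_num [k]
      · rw [if_neg fun h => hall (Finset.mem_filter.1 h).2.2]
        push Not at hall
        obtain ⟨t, ht, hne⟩ := hall
        refine (Finset.prod_eq_zero ht ?_).symm
        rw [(quadraticChar_dichotomy (hxt t ht)).resolve_left hne]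
        norm_num
  have hAP : |2 ^ k * (A.card : ℝ) - ∑ x, P x| ≤ 2 ^ k * (k + 1) := by
    have h1 : 2 ^ k * (A.card : ℝ) = ∑ x, if x ∈ A then (2 : ℝ) ^ k else 0 := by
      rw [Finset.sum_ite_mem, Finset.univ_inter, Finset.sum_const, nsmul_eq_mul, mul_comm]
    rw [h1, ← Finset.sum_sub_distrib]
    refine (Finset.abs_sum_le_sum_abs _ _).trans ((Finset.sum_le_sum fun x _ => hpt x).trans ?_)
    rw [Finset.sum_ite_mem, Finset.univ_inter, Finset.sum_const, nsmul_eq_mul, mul_comm]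
    refine mul_le_mul_of_nonneg_left ?_ h2k.le
    have h2 := (Finset.card_insert_le (0 : ZMod p) (T.image fun t => -t)).trans
      (Nat.succ_le_succ Finset.card_image_le)
    exact_mod_cast h2
  have hPp : |∑ x, P x - p| ≤ 2 ^ k * (20 * k * √p) := by
    have h1 : ∑ x, P x = p + ∑ S ∈ T.powerset.erase ∅,
        ∑ x, ∏ t ∈ S, ((quadraticChar (ZMod p) (x + t) : ℤ) : ℝ) := by
      simp only [hP, Finset.prod_one_add]
      rw [Finset.sum_comm, ← Finset.add_sum_erase _ _ (Finset.empty_mem_powerset T)]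
      simp [ZMod.card]
    rw [h1, add_sub_cancel_left]
    refine (Finset.abs_sum_le_sum_abs _ _).trans ?_
    have h2 : ∀ S ∈ T.powerset.erase ∅,
        |∑ x, ∏ t ∈ S, ((quadraticChar (ZMod p) (x + t) : ℤ) : ℝ)| ≤ 20 * k * √p := by
      intro S hS
      rw [Finset.mem_erase, Finset.mem_powerset] at hS
      refine (abs_sum_prod_quadraticChar_add_le hp2 S
        (Finset.nonempty_iff_ne_empty.2 hS.1)).trans ?_
      have : (S.card : ℝ) ≤ k := by exact_mod_cast Finset.card_le_card hS.2
      gcongr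
    refine (Finset.sum_le_sum h2).trans ?_
    rw [Finset.sum_const, nsmul_eq_mul]
    refine mul_le_mul_of_nonneg_right ?_ (by positivity)
    have h3 := (Finset.card_erase_le (s := T.powerset) (a := ∅)).trans_eq (Finset.card_powerset T)
    exact_mod_cast h3
  have hcomb : |2 ^ k * (A.card : ℝ) - p| ≤ 2 ^ k * (22 * k * √p) := by
    have h1 := abs_sub_le (2 ^ k * (A.card : ℝ)) (∑ x, P x) p
    have h2 : (k : ℝ) + 1 ≤ 2 * k * √p := by nlinarith
    nlinarith
  have hdiv : (A.card : ℝ) - p / 2 ^ k = (2 ^ k * (A.card : ℝ) - p) / 2 ^ k := by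
    field_simp
  rw [hdiv, abs_div, abs_of_pos h2k, div_le_iff₀ h2k]
  linarith

theorem card_ker_unitsMap_prime_pow {p n : ℕ} (hp : p.Prime) (hn : n ≠ 0) :
    Nat.card (ZMod.unitsMap (dvd_pow_self p hn)).ker = p ^ (n - 1) := by
  have : NeZero p := ⟨hp.ne_zero⟩
  have h1 := Subgroup.card_mul_index (ZMod.unitsMap (dvd_pow_self p hn)).ker
  rw [Subgroup.index_ker, MonoidHom.range_eq_top.2 (ZMod.unitsMap_surjective _),
    Nat.card_congr Subgroup.topEquiv.toEquiv, Nat.card_eq_fintype_card (α := (ZMod p)ˣ),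
    Nat.card_eq_fintype_card (α := (ZMod (p ^ n))ˣ), ZMod.card_units_eq_totient,
    ZMod.card_units_eq_totient, Nat.totient_prime hp,
    Nat.totient_prime_pow hp (Nat.pos_of_ne_zero hn)] at h1
  exact Nat.eq_of_mul_eq_mul_right (Nat.sub_pos_of_lt hp.one_lt) h1

theorem exists_eq_unit_sq_iff_quadraticChar_cast_eq_one {p n : ℕ} [Fact p.Prime] (hp2 : p ≠ 2)
    (hn : n ≠ 0) (y : ZMod (p ^ n)) :
    (∃ u : (ZMod (p ^ n))ˣ, y = (u : ZMod (p ^ n)) ^ 2) ↔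
      quadraticChar (ZMod p) (ZMod.castHom (dvd_pow_self p hn) (ZMod p) y) = 1 := by
  have hp : p.Prime := Fact.out
  set c := ZMod.castHom (dvd_pow_self p hn) (ZMod p)
  constructor
  · rintro ⟨u, rfl⟩
    rw [map_pow]
    exact quadraticChar_sq_one' (u.isUnit.map c).ne_zero
  · intro h
    have hy0 : c y ≠ 0 := fun h0 => by simp [h0] at h
    have hyu : IsUnit y := by
      have hv : c y = (y.val : ZMod p) := by
        conv_lhs => rw [← ZMod.natCast_zmod_val y]
        exact map_natCast c _
      rw [← ZMod.natCast_zmod_val y, ZMod.isUnit_iff_coprime]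
      refine Nat.Coprime.pow_right _ ((Nat.Prime.coprime_iff_not_dvd hp).2 fun hd => hy0 ?_).symm
      rw [hv, (ZMod.natCast_eq_zero_iff _ _).2 hd]
    obtain ⟨y, rfl⟩ := hyu
    obtain ⟨v, hv⟩ := (quadraticChar_one_iff_isSquare hy0).1 h
    have hv0 : v ≠ 0 := by
      rintro rfl
      simp [hv] at hy0
    obtain ⟨w, hw⟩ := ZMod.unitsMap_surjective (dvd_pow_self p hn) (Units.mk0 v hv0)
    have hcop : (Nat.card (ZMod.unitsMap (dvd_pow_self p hn)).ker).Coprime 2 := by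
      rw [card_ker_unitsMap_prime_pow hp hn]
      exact Nat.Coprime.pow_left _ ((Nat.coprime_primes hp Nat.prime_two).2 hp2)
    have hmem : y * (w ^ 2)⁻¹ ∈ (ZMod.unitsMap (dvd_pow_self p hn)).ker := by
      rw [MonoidHom.mem_ker, map_mul, map_inv, map_pow, hw, mul_inv_eq_one]
      ext
      rw [sq]
      exact hv
    obtain ⟨z, hz⟩ := (powCoprime hcop).surjective ⟨_, hmem⟩
    have hz' : (z : (ZMod (p ^ n))ˣ) ^ 2 = y * (w ^ 2)⁻¹ := congrArg Subtype.val hz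
    refine ⟨z * w, ?_⟩
    rw [← Units.val_pow_eq_pow_val, mul_pow, hz', inv_mul_cancel_right]

theorem card_filter_comp_monoidHom {G H : Type*} [Group G] [Group H] [Fintype G] [Fintype H]
    (φ : G →* H) (hφ : Function.Surjective φ) (P : H → Prop) [DecidablePred P] :
    (Finset.univ.filter fun g => P (φ g)).card =
      Nat.card φ.ker * (Finset.univ.filter P).card := by
  classical
  rw [Finset.card_eq_sum_card_fiberwise (f := φ) (t := Finset.univ.filter P)
    (fun g hg => by simpa using hg), mul_comm, ← smul_eq_mul, ← Finset.sum_const]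
  refine Finset.sum_congr rfl fun h hh => ?_
  have h1 : (Finset.univ.filter fun g => P (φ g)).filter (fun g => φ g = h) =
      Finset.univ.filter fun g => φ g = h := by
    ext g
    simp only [Finset.mem_filter, Finset.mem_univ, true_and] at hh ⊢
    exact ⟨fun hg => hg.2, fun hg => ⟨hg ▸ hh, hg⟩⟩
  rw [h1, MonoidHom.card_fiber_eq_of_mem_range φ (hφ h) ⟨1, map_one φ⟩, Nat.card_eq_fintype_card,
    Fintype.card_subtype]
  simp only [MonoidHom.mem_ker]

theorem card_filter_units_val {F : Type*} [Field F] [Fintype F] [DecidableEq F] (P : F → Prop)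
    [DecidablePred P] :
    (Finset.univ.filter fun a : Fˣ => P a).card =
      (Finset.univ.filter fun x : F => x ≠ 0 ∧ P x).card := by
  rw [← Finset.card_map ⟨((↑) : Fˣ → F), Units.val_injective⟩]
  congr 1
  ext x
  simp only [Finset.mem_map, Finset.mem_filter, Finset.mem_univ, true_and,
    Function.Embedding.coeFn_mk]
  constructor
  · rintro ⟨a, ha, rfl⟩
    exact ⟨a.ne_zero, ha⟩
  · rintro ⟨hx, hP⟩
    exact ⟨Units.mk0 x hx, hP, rfl⟩

end QuadraticCharacterSums

/-- With `A = {a ∈ (ZMod p^n)ˣ : a + τ is a unit square for all τ ∈ T}`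
and `k` the number of distinct reductions mod `p` of elements of `T`,
`| |A| - φ(p^n)/2^k | ≤ C k φ(p^n)/√p` for an absolute constant `C > 0`. -/
theorem card_of_squares_set :
    ∃ C : ℝ, 0 < C ∧
      ∀ (p : ℕ) (hp : p.Prime), Odd p → ∀ n : ℕ, 1 ≤ n →
        letI : NeZero p := ⟨hp.ne_zero⟩
        ∀ T : Finset (ZMod (p ^ n)),
          |((Finset.univ.filter (fun a : (ZMod (p ^ n))ˣ =>
                ∀ τ ∈ T, ∃ u : (ZMod (p ^ n))ˣ,
                  (a : ZMod (p ^ n)) + τ = (u : ZMod (p ^ n)) ^ 2)).card : ℝ)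
              - ((p ^ n).totient : ℝ)
                  / 2 ^ ((T.image fun τ => ((ZMod.val τ : ZMod p))).card)|
            ≤ C * ((T.image fun τ => ((ZMod.val τ : ZMod p))).card : ℝ)
                * ((p ^ n).totient : ℝ) / Real.sqrt p := by
  refine ⟨46, by norm_num, ?_⟩
  intro p hp hodd n hn T
  have : Fact p.Prime := ⟨hp⟩
  have hp2 : p ≠ 2 := by
    rintro rfl
    exact absurd hodd (by decide)
  have hn0 : n ≠ 0 := by omega
  set c := ZMod.castHom (dvd_pow_self p hn0) (ZMod p)
  have hval : (fun τ : ZMod (p ^ n) => ((ZMod.val τ : ZMod p))) = c := by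
    ext τ
    conv_rhs => rw [← ZMod.natCast_zmod_val τ]
    exact (map_natCast c _).symm
  rw [hval]
  set T₀ := T.image c with hT₀
  rcases T.eq_empty_or_nonempty with rfl | hT
  · simp [hT₀, ZMod.card_units_eq_totient]
  have hcard : (Finset.univ.filter (fun a : (ZMod (p ^ n))ˣ =>
      ∀ τ ∈ T, ∃ u : (ZMod (p ^ n))ˣ,
        (a : ZMod (p ^ n)) + τ = (u : ZMod (p ^ n)) ^ 2)).card =
      p ^ (n - 1) * (Finset.univ.filter fun x : ZMod p =>
        x ≠ 0 ∧ ∀ t ∈ T₀, quadraticChar (ZMod p) (x + t) = 1).card := by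
    rw [← card_filter_units_val fun x : ZMod p => ∀ t ∈ T₀, quadraticChar (ZMod p) (x + t) = 1,
      ← card_ker_unitsMap_prime_pow hp hn0,
      ← card_filter_comp_monoidHom _ (ZMod.unitsMap_surjective (dvd_pow_self p hn0))
        fun b : (ZMod p)ˣ => ∀ t ∈ T₀, quadraticChar (ZMod p) ((b : ZMod p) + t) = 1]
    congr 1
    refine Finset.filter_congr fun a _ => ?_
    rw [hT₀, Finset.forall_mem_image]
    refine forall₂_congr fun τ _ => ?_
    rw [exists_eq_unit_sq_iff_quadraticChar_cast_eq_one hp2 hn0, map_add]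
    rfl
  have hbound := abs_card_filter_quadraticChar_add_eq_one_sub_le hp2 T₀ (hT.image c)
  rw [hcard, Nat.totient_prime_pow hp hn, Nat.cast_mul, Nat.cast_mul, Nat.cast_sub hp.one_le]
  have hk : (1 : ℝ) ≤ T₀.card := by exact_mod_cast (hT.image c).card_pos
  set k := T₀.card
  set N := ((Finset.univ.filter fun x : ZMod p =>
    x ≠ 0 ∧ ∀ t ∈ T₀, quadraticChar (ZMod p) (x + t) = 1).card : ℝ)
  set M := ((p ^ (n - 1) : ℕ) : ℝ)
  have hM : 0 ≤ M := Nat.cast_nonneg _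
  have hp2R : (2 : ℝ) ≤ p := by exact_mod_cast hp.two_le
  have hq2 : √(p : ℝ) * √p = p := Real.mul_self_sqrt (Nat.cast_nonneg p)
  have hq : 1 ≤ √(p : ℝ) := Real.one_le_sqrt.2 (by linarith)
  set q := √(p : ℝ)
  have hinv : (1 : ℝ) / 2 ^ k ≤ 1 := by
    rw [div_le_one (by positivity)]
    exact one_le_pow₀ (by norm_num)
  have hinv0 : (0 : ℝ) ≤ 1 / 2 ^ k := by positivity
  have hN : |N - ((p : ℝ) - 1) / 2 ^ k| ≤ 23 * k * q := by
    have h1 : N - ((p : ℝ) - 1) / 2 ^ k = (N - p / 2 ^ k) + 1 / 2 ^ k := by ring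
    have h2 := abs_add_le (N - p / 2 ^ k) (1 / 2 ^ k)
    rw [abs_of_nonneg hinv0] at h2
    rw [h1]
    nlinarith
  have hq' : q ≤ 2 * ((p : ℝ) - 1) / q := by
    rw [le_div_iff₀ (by linarith)]
    linarith
  have hfac : M * N - M * ((p : ℝ) - ((1 : ℕ) : ℝ)) / 2 ^ k =
      M * (N - ((p : ℝ) - 1) / 2 ^ k) := by
    push_cast
    ring
  rw [hfac, abs_mul, abs_of_nonneg hM]
  calc M * |N - ((p : ℝ) - 1) / 2 ^ k| ≤ M * (23 * k * (2 * ((p : ℝ) - 1) / q)) := by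
        gcongr
        exact hN.trans (by gcongr)
    _ = 46 * k * (M * ((p : ℝ) - ((1 : ℕ) : ℝ))) / q := by
        push_cast
        ring

end
end

section
/- Let M ≥ 2 be an integer. There is a constant C(M) > 0 depending only on M such that for every odd prime p, every integer n ≥ 2, and every sequence (a_h)_{h≥0} of real numbers with 0 ≤ a₀ ≤ 1 and 0 ≤ a_h ≤ 1/h for all h ≥ 1, one has Σ Π_{i=1}^M a_{h_i} ≤ C(M)·log^M(p^n)/p, where the sum runs over all M-tuples (h₁, …, h_M) of integers in {0, 1, …, p^n} for which there exist indices i ≠ j with h_i ≡ h_j (mod p) and h_i ≠ h_j. -/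
open scoped BigOperators
open Filter MeasureTheory

noncomputable section

/-- The majorant `1 / max h 1` of the sequences `(a_h)`. -/
def recipMax (h : ℕ) : ℝ := ((max h 1 : ℕ) : ℝ)⁻¹

lemma recipMax_nonneg (h : ℕ) : 0 ≤ recipMax h := by
  unfold recipMax
  positivity

lemma sum_recipMax_le (N : ℕ) : ∑ h ∈ Finset.range (N + 1), recipMax h ≤ 2 + Real.log N := by
  have hharm : ∑ h ∈ Finset.range N, recipMax (h + 1) = (harmonic N : ℝ) := by
    simp [recipMax, harmonic]
  have hzero : recipMax 0 = 1 := by simp [recipMax]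
  rw [Finset.sum_range_succ', hharm, hzero]
  linarith [harmonic_le_one_add_log N]

/-- If `x < y` are congruent mod `p`, then `y` is at least `p` times `(y - x) / p ≥ 1`. -/
lemma recipMax_le_of_modEq {p x y : ℕ} (hp : 0 < p) (hmod : x % p = y % p) (hlt : x < y) :
    recipMax y ≤ (p : ℝ)⁻¹ * recipMax ((y - x) / p) := by
  obtain ⟨k, hk⟩ : p ∣ y - x := (Nat.modEq_iff_dvd' hlt.le).1 hmod
  have hk0 : 0 < k := by
    rcases Nat.eq_zero_or_pos k with rfl | h
    · omega
    · exact h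
  have hpk : p * k ≤ y := by omega
  rw [hk, Nat.mul_div_cancel_left _ hp, recipMax, recipMax, max_eq_left (by omega),
    max_eq_left hk0, ← mul_inv]
  exact inv_anti₀ (by positivity) (by exact_mod_cast hpk)

/-- The contribution of the tuples with `h i < h j` congruent mod `p`, bounded by replacing the
entry `h j` with `(h j - h i) / p`. -/
lemma sum_prod_recipMax_le_of_modEq {ι : Type*} [Fintype ι] [DecidableEq ι] {p : ℕ} (hp : 0 < p)
    (N : ℕ) {i j : ι} (hij : i ≠ j) :
    ∑ h ∈ (Fintype.piFinset fun _ : ι => Finset.range N).filter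
        (fun h => h i % p = h j % p ∧ h i < h j), ∏ k, recipMax (h k)
      ≤ (p : ℝ)⁻¹ * (∑ h ∈ Finset.range N, recipMax h) ^ Fintype.card ι := by
  set S := (Fintype.piFinset fun _ : ι => Finset.range N).filter
    (fun h => h i % p = h j % p ∧ h i < h j)
  let e : (ι → ℕ) → ι → ℕ := fun h => Function.update h j ((h j - h i) / p)
  have hmem : ∀ h ∈ S, e h ∈ Fintype.piFinset fun _ : ι => Finset.range N := by
    intro h hh
    simp only [S, Finset.mem_filter, Fintype.mem_piFinset, Finset.mem_range] at hh ⊢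
    intro k
    rcases eq_or_ne k j with rfl | hk
    · simpa [e] using
        ((Nat.div_le_self _ _).trans (Nat.sub_le _ _)).trans_lt (hh.1 k)
    · simpa [e, hk] using hh.1 k
  have hinj : Set.InjOn e S := by
    intro h hh g hg heq
    rw [Finset.mem_coe, Finset.mem_filter] at hh hg
    have hne : ∀ k, k ≠ j → h k = g k := fun k hk => by
      simpa [e, hk] using congrFun heq k
    have hquot : (h j - h i) / p = (g j - g i) / p := by
      simpa [e] using congrFun heq j
    have hsub : h j - h i = g j - g i := by
      rw [← Nat.div_mul_cancel ((Nat.modEq_iff_dvd' hh.2.2.le).1 hh.2.1),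
        ← Nat.div_mul_cancel ((Nat.modEq_iff_dvd' hg.2.2.le).1 hg.2.1), hquot]
    funext k
    rcases eq_or_ne k j with rfl | hk
    · have := hne i hij
      omega
    · exact hne k hk
  have hterm : ∀ h ∈ S, ∏ k, recipMax (h k) ≤ (p : ℝ)⁻¹ * ∏ k, recipMax (e h k) := by
    intro h hh
    have hcond := (Finset.mem_filter.1 hh).2
    rw [← Finset.mul_prod_erase _ _ (Finset.mem_univ j),
      ← Finset.mul_prod_erase _ (fun k => recipMax (e h k)) (Finset.mem_univ j), ← mul_assoc]
    have hrest : ∏ k ∈ Finset.univ.erase j, recipMax (e h k)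
        = ∏ k ∈ Finset.univ.erase j, recipMax (h k) :=
      Finset.prod_congr rfl fun k hk => by simp [e, Finset.ne_of_mem_erase hk]
    rw [hrest]
    refine mul_le_mul_of_nonneg_right ?_ (Finset.prod_nonneg fun k _ => recipMax_nonneg _)
    simpa [e] using recipMax_le_of_modEq hp hcond.1 hcond.2
  calc ∑ h ∈ S, ∏ k, recipMax (h k)
      ≤ ∑ h ∈ S, (p : ℝ)⁻¹ * ∏ k, recipMax (e h k) := Finset.sum_le_sum hterm
    _ = (p : ℝ)⁻¹ * ∑ h ∈ S.image e, ∏ k, recipMax (h k) := by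
        rw [← Finset.mul_sum, Finset.sum_image hinj]
    _ ≤ (p : ℝ)⁻¹ *
          ∑ h ∈ Fintype.piFinset fun _ : ι => Finset.range N, ∏ k, recipMax (h k) := by
        refine mul_le_mul_of_nonneg_left ?_ (by positivity)
        exact Finset.sum_le_sum_of_subset_of_nonneg (Finset.image_subset_iff.2 hmem)
          fun h _ _ => Finset.prod_nonneg fun k _ => recipMax_nonneg _
    _ = (p : ℝ)⁻¹ * (∑ h ∈ Finset.range N, recipMax h) ^ Fintype.card ι := by
        rw [← Finset.prod_univ_sum, Finset.prod_const, Finset.card_univ]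

/-- The sum over tuples with two distinct congruent entries, by a union bound over the positions of
these entries. -/
lemma sum_prod_recipMax_le {ι : Type*} [Fintype ι] [DecidableEq ι] {p : ℕ} (hp : 0 < p) (N : ℕ)
    [DecidablePred fun h : ι → ℕ => ∃ i j : ι, i ≠ j ∧ h i % p = h j % p ∧ h i ≠ h j] :
    ∑ h ∈ (Fintype.piFinset fun _ : ι => Finset.range N).filter
        (fun h => ∃ i j : ι, i ≠ j ∧ h i % p = h j % p ∧ h i ≠ h j), ∏ k, recipMax (h k)
      ≤ (Fintype.card ι : ℝ) ^ 2 *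
        ((p : ℝ)⁻¹ * (∑ h ∈ Finset.range N, recipMax h) ^ Fintype.card ι) := by
  set B := (p : ℝ)⁻¹ * (∑ h ∈ Finset.range N, recipMax h) ^ Fintype.card ι
  let T : ι × ι → Finset (ι → ℕ) := fun q =>
    (Fintype.piFinset fun _ : ι => Finset.range N).filter
      (fun h => h q.1 % p = h q.2 % p ∧ h q.1 < h q.2)
  have hnonneg : ∀ h : ι → ℕ, 0 ≤ ∏ k, recipMax (h k) := fun h =>
    Finset.prod_nonneg fun k _ => recipMax_nonneg _
  have hB : 0 ≤ B := mul_nonneg (by positivity)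
    (pow_nonneg (Finset.sum_nonneg fun h _ => recipMax_nonneg h) _)
  have hT : ∀ q : ι × ι, ∑ h ∈ T q, ∏ k, recipMax (h k) ≤ B := by
    rintro ⟨i, j⟩
    rcases eq_or_ne i j with rfl | hij
    · simpa [T] using hB
    · exact sum_prod_recipMax_le_of_modEq hp N hij
  calc _ ≤ ∑ h ∈ Finset.univ.biUnion T, ∏ k, recipMax (h k) := by
        refine Finset.sum_le_sum_of_subset_of_nonneg (fun h hh => ?_) fun h _ _ => hnonneg h
        obtain ⟨hmem, i, j, -, hmod, hne⟩ := Finset.mem_filter.1 hh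
        rw [Finset.mem_biUnion]
        rcases lt_or_gt_of_ne hne with hlt | hlt
        · exact ⟨(i, j), Finset.mem_univ _, Finset.mem_filter.2 ⟨hmem, hmod, hlt⟩⟩
        · exact ⟨(j, i), Finset.mem_univ _, Finset.mem_filter.2 ⟨hmem, hmod.symm, hlt⟩⟩
    _ ≤ ∑ h ∈ Finset.univ.biUnion T, ∑ q, if h ∈ T q then ∏ k, recipMax (h k) else 0 := by
        refine Finset.sum_le_sum fun h hh => ?_
        obtain ⟨q, -, hq⟩ := Finset.mem_biUnion.1 hh
        have := Finset.single_le_sum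
          (f := fun q => if h ∈ T q then ∏ k, recipMax (h k) else 0)
          (fun q _ => by split_ifs <;> simp [hnonneg h]) (Finset.mem_univ q)
        simpa only [if_pos hq] using this
    _ = ∑ q, ∑ h ∈ T q, ∏ k, recipMax (h k) := by
        rw [Finset.sum_comm]
        refine Finset.sum_congr rfl fun q _ => ?_
        rw [Finset.sum_ite_mem, Finset.inter_eq_right.2
          (Finset.subset_biUnion_of_mem T (Finset.mem_univ q))]
    _ ≤ ∑ _q : ι × ι, B := Finset.sum_le_sum fun q _ => hT q
    _ = (Fintype.card ι : ℝ) ^ 2 * B := by simp [sq]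

lemma two_le_log_pow {p n : ℕ} (hp : 3 ≤ p) (hn : 2 ≤ n) : 2 ≤ Real.log ((p : ℝ) ^ n) := by
  have hp' : (3 : ℝ) ≤ p := by exact_mod_cast hp
  have hn' : (2 : ℝ) ≤ n := by exact_mod_cast hn
  have hlog : 1 ≤ Real.log p := by
    rw [Real.le_log_iff_exp_le (by linarith)]
    linarith [Real.exp_one_lt_d9]
  rw [Real.log_pow]
  nlinarith

/-- For `M ≥ 2` there is `C(M) > 0` such that for every odd prime `p`,
every `n ≥ 2` and every sequence `0 ≤ a₀ ≤ 1`, `0 ≤ a_h ≤ 1/h` (`h ≥ 1`), the sum of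
`∏ a_{hᵢ}` over `M`-tuples in `{0,…,p^n}` having two distinct entries congruent mod `p`
is at most `C(M) log^M(p^n)/p`. -/
theorem congruent_tuples_sum_bound (M : ℕ) (hM : 2 ≤ M) :
    ∃ C : ℝ, 0 < C ∧
      ∀ p : ℕ, p.Prime → Odd p → ∀ n : ℕ, 2 ≤ n →
        ∀ a : ℕ → ℝ, 0 ≤ a 0 → a 0 ≤ 1 →
          (∀ h : ℕ, 1 ≤ h → 0 ≤ a h ∧ a h ≤ 1 / (h : ℝ)) →
          ∑ h ∈ (Fintype.piFinset fun _ : Fin M => Finset.range (p ^ n + 1)).filter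
              (fun h => ∃ i j : Fin M, i ≠ j ∧ h i % p = h j % p ∧ h i ≠ h j),
            ∏ i : Fin M, a (h i)
            ≤ C * Real.log ((p : ℝ) ^ n) ^ M / p := by
  have hM0 : 0 < M := by omega
  refine ⟨(M : ℝ) ^ 2 * 2 ^ M, by positivity, ?_⟩
  intro p hp hodd n hn a ha0 ha1 ha
  have hp3 : 3 ≤ p := by
    have := hp.two_le
    have : p ≠ 2 := by rintro rfl; exact absurd hodd (by decide)
    omega
  have hnonneg : ∀ h, 0 ≤ a h := fun h => by
    rcases Nat.eq_zero_or_pos h with rfl | hh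
    · exact ha0
    · exact (ha h hh).1
  have hle : ∀ h, a h ≤ recipMax h := fun h => by
    rcases Nat.eq_zero_or_pos h with rfl | hh
    · simpa [recipMax] using ha1
    · rw [recipMax, max_eq_left hh, ← one_div]
      exact (ha h hh).2
  have hsum : ∑ h ∈ Finset.range (p ^ n + 1), recipMax h ≤ 2 * Real.log ((p : ℝ) ^ n) := by
    have hbound := sum_recipMax_le (p ^ n)
    push_cast at hbound
    linarith [two_le_log_pow hp3 hn]
  have hpow := pow_le_pow_left₀ (Finset.sum_nonneg fun h _ => recipMax_nonneg h) hsum M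
  refine (Finset.sum_le_sum fun h _ =>
    Finset.prod_le_prod (fun i _ => hnonneg (h i)) fun i _ => hle (h i)).trans ?_
  refine (sum_prod_recipMax_le (ι := Fin M) hp.pos (p ^ n + 1)).trans ?_
  rw [Fintype.card_fin]
  calc _ ≤ (M : ℝ) ^ 2 * ((p : ℝ)⁻¹ * (2 * Real.log ((p : ℝ) ^ n)) ^ M) := by gcongr
    _ = _ := by rw [mul_pow]; ring

end
end

section
/- Let p be an odd prime, n ≥ 1 an integer, and s, π integers with s ≡ π + 1 (mod p^n). Suppose ℓ ≥ 1 is an integer with 1 ≤ ℓ ≤ n such that p^ℓ exactly divides π − 1 (i.e. p^ℓ | π−1 and p^{ℓ+1} ∤ π−1). Then the number of residues x modulo p^n with x² − sx + π ≡ 0 (mod p^n) equals: if n is even, 2·p^ℓ when 1 ≤ ℓ ≤ n/2 − 1, and p^{n/2} when n/2 ≤ ℓ ≤ n; if n is odd, 2·p^ℓ when 1 ≤ ℓ ≤ (n−1)/2, and p^{(n−1)/2} when (n−1)/2 + 1 ≤ ℓ ≤ n. -/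
open scoped BigOperators
open Filter MeasureTheory

noncomputable section

theorem Prime.exists_pow_dvd_of_pow_dvd_mul {p : ℤ} (hp : Prime p) {n : ℕ} {x y : ℤ}
    (h : p ^ n ∣ x * y) : ∃ i j, i + j = n ∧ p ^ i ∣ x ∧ p ^ j ∣ y := by
  obtain ⟨u, v, hu, hv, huv⟩ := exists_dvd_and_dvd_of_dvd_mul h
  obtain ⟨i, j, b, c, hij, -, rfl, rfl⟩ :=
    mul_eq_mul_prime_pow hp (show u * v = 1 * p ^ n by rw [one_mul, ← huv])
  exact ⟨i, j, hij, dvd_of_mul_left_dvd hu, dvd_of_mul_left_dvd hv⟩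

/-- If `p ^ l` exactly divides `a - b`, then `p ^ n ∣ (x - a) * (x - b)` forces one of the factors
to absorb all but `p ^ l`. -/
theorem Prime.pow_dvd_sub_mul_sub_iff_or {p : ℤ} (hp : Prime p) {n l : ℕ} (hln : l ≤ n) {a b : ℤ}
    (hdvd : p ^ l ∣ a - b) (hndvd : ¬ p ^ (l + 1) ∣ a - b) (h2 : 2 * l < n) (x : ℤ) :
    p ^ n ∣ (x - a) * (x - b) ↔ p ^ (n - l) ∣ x - a ∨ p ^ (n - l) ∣ x - b := by
  have hsplit : p ^ n = p ^ (n - l) * p ^ l := by rw [← pow_add, Nat.sub_add_cancel hln]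
  have hle : p ^ l ∣ p ^ (n - l) := pow_dvd_pow p (by omega)
  constructor
  · intro h
    obtain ⟨i, j, hij, hi, hj⟩ := hp.exists_pow_dvd_of_pow_dvd_mul h
    by_contra! hcon
    have hi' : i < n - l := by
      by_contra! hc
      exact hcon.1 ((pow_dvd_pow p hc).trans hi)
    have hj' : j < n - l := by
      by_contra! hc
      exact hcon.2 ((pow_dvd_pow p hc).trans hj)
    refine hndvd ?_
    have := dvd_sub ((pow_dvd_pow p (show l + 1 ≤ j by omega)).trans hj)
      ((pow_dvd_pow p (show l + 1 ≤ i by omega)).trans hi)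
    rwa [sub_sub_sub_cancel_left] at this
  · rintro (h | h)
    · rw [hsplit]
      refine mul_dvd_mul h ?_
      have := dvd_add (hle.trans h) hdvd
      rwa [sub_add_sub_cancel] at this
    · rw [hsplit, mul_comm (x - a)]
      refine mul_dvd_mul h ?_
      have := dvd_sub (hle.trans h) hdvd
      rwa [sub_sub_sub_cancel_right] at this

theorem Prime.pow_dvd_sub_mul_sub_iff {p : ℤ} (hp : Prime p) {n l : ℕ} {a b : ℤ}
    (hdvd : p ^ l ∣ a - b) (h2 : n ≤ 2 * l) (x : ℤ) :
    p ^ n ∣ (x - a) * (x - b) ↔ p ^ ((n + 1) / 2) ∣ x - b := by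
  have hd : p ^ ((n + 1) / 2) ∣ a - b := (pow_dvd_pow p (by omega)).trans hdvd
  constructor
  · intro h
    obtain ⟨i, j, hij, hi, hj⟩ := hp.exists_pow_dvd_of_pow_dvd_mul h
    obtain hk | hk : (n + 1) / 2 ≤ i ∨ (n + 1) / 2 ≤ j := by omega
    · have := dvd_add ((pow_dvd_pow p hk).trans hi) hd
      rwa [sub_add_sub_cancel] at this
    · exact (pow_dvd_pow p hk).trans hj
  · intro h
    have := dvd_sub h hd
    rw [sub_sub_sub_cancel_right] at this
    refine (pow_dvd_pow p (show n ≤ (n + 1) / 2 + (n + 1) / 2 by omega)).trans ?_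
    rw [pow_add]
    exact mul_dvd_mul this h

theorem ZMod.card_filter_eq_card_filter_Ico {N : ℕ} [NeZero N] (P : ZMod N → Prop)
    [DecidablePred P] :
    (Finset.univ.filter P).card =
      ((Finset.Ico (0 : ℤ) N).filter fun y : ℤ => P (y : ZMod N)).card := by
  symm
  refine Finset.card_bij (fun y _ => (y : ZMod N)) ?_ ?_ ?_
  · intro y hy
    simpa using (Finset.mem_filter.1 hy).2
  · intro y hy z hz h
    simp only [Finset.mem_filter, Finset.mem_Ico] at hy hz
    have h' := (ZMod.intCast_eq_intCast_iff y z N).1 h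
    rwa [Int.ModEq, Int.emod_eq_of_lt hy.1.1 hy.1.2, Int.emod_eq_of_lt hz.1.1 hz.1.2] at h'
  · intro x hx
    refine ⟨(x.val : ℤ), ?_, by simp⟩
    simp only [Finset.mem_filter, Finset.mem_Ico]
    exact ⟨⟨by positivity, by exact_mod_cast x.val_lt⟩, by simpa using hx⟩

theorem Int.card_filter_Ico_dvd_sub {r : ℤ} (hr : 0 < r) (m : ℕ) (c : ℤ) :
    ((Finset.Ico (0 : ℤ) (r * m)).filter fun y => r ∣ y - c).card = m := by
  have hr' : (r : ℚ) ≠ 0 := by exact_mod_cast hr.ne'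
  have h := Int.Ico_filter_modEq_card 0 (r * m) hr c
  have hq : (((r * m : ℤ) : ℚ) - c) / r = (((0 : ℤ) : ℚ) - c) / r + (m : ℤ) := by
    push_cast
    field_simp
    ring
  rw [hq, Int.ceil_add_intCast, add_sub_cancel_left, max_eq_left (by positivity)] at h
  have hiff (y : ℤ) : r ∣ y - c ↔ y ≡ c [ZMOD r] := by
    rw [Int.modEq_comm, Int.modEq_iff_dvd]
  simp only [hiff]
  exact_mod_cast h

theorem Int.card_filter_Ico_pow_dvd_sub {p : ℕ} (hp : 0 < p) {k n : ℕ} (hkn : k ≤ n) (c : ℤ) :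
    ((Finset.Ico (0 : ℤ) ((p ^ n : ℕ) : ℤ)).filter fun y => (p : ℤ) ^ k ∣ y - c).card =
      p ^ (n - k) := by
  have hsplit : ((p ^ n : ℕ) : ℤ) = (p : ℤ) ^ k * ((p ^ (n - k) : ℕ) : ℤ) := by
    push_cast
    rw [← pow_add, Nat.add_sub_cancel' hkn]
  rw [hsplit]
  exact Int.card_filter_Ico_dvd_sub (by positivity) _ c

/-- Counting roots of `x² - sx + π ≡ 0 (mod p^n)` when
`s ≡ π + 1 (mod p^n)` and `p^ℓ` exactly divides `π - 1`. Here `q` plays the role of `π`. -/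
theorem hensel_quadratic_count (p : ℕ) (hp : p.Prime) (hodd : Odd p) (n : ℕ) (hn : 1 ≤ n)
    (s q : ℤ) (hs : s ≡ q + 1 [ZMOD ((p : ℤ) ^ n)])
    (l : ℕ) (hl1 : 1 ≤ l) (hln : l ≤ n)
    (hdvd : (p : ℤ) ^ l ∣ q - 1) (hndvd : ¬ (p : ℤ) ^ (l + 1) ∣ q - 1) :
    letI : NeZero p := ⟨hp.ne_zero⟩
    (Finset.univ.filter (fun x : ZMod (p ^ n) =>
        x ^ 2 - (s : ZMod (p ^ n)) * x + (q : ZMod (p ^ n)) = 0)).card =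
      if Even n then (if l ≤ n / 2 - 1 then 2 * p ^ l else p ^ (n / 2))
      else (if l ≤ (n - 1) / 2 then 2 * p ^ l else p ^ ((n - 1) / 2)) := by
  have : NeZero p := ⟨hp.ne_zero⟩
  have hp' : Prime (p : ℤ) := Nat.prime_iff_prime_int.1 hp
  have hroot (y : ℤ) : (y : ZMod (p ^ n)) ^ 2 - (s : ZMod (p ^ n)) * (y : ZMod (p ^ n))
      + (q : ZMod (p ^ n)) = 0 ↔ (p : ℤ) ^ n ∣ (y - q) * (y - 1) := by
    have hs' : (s : ZMod (p ^ n)) = ((q + 1 : ℤ) : ZMod (p ^ n)) :=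
      (ZMod.intCast_eq_intCast_iff _ _ _).2 (by exact_mod_cast hs)
    have hfactor : (y : ZMod (p ^ n)) ^ 2 - (s : ZMod (p ^ n)) * (y : ZMod (p ^ n))
        + (q : ZMod (p ^ n)) = (((y - q) * (y - 1) : ℤ) : ZMod (p ^ n)) := by
      rw [hs']
      push_cast
      ring
    rw [hfactor, ZMod.intCast_zmod_eq_zero_iff_dvd]
    push_cast
    rfl
  have hcard : (Finset.univ.filter (fun x : ZMod (p ^ n) =>
      x ^ 2 - (s : ZMod (p ^ n)) * x + (q : ZMod (p ^ n)) = 0)).card =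
      if 2 * l < n then 2 * p ^ l else p ^ (n / 2) := by
    rw [ZMod.card_filter_eq_card_filter_Ico]
    simp only [hroot]
    split_ifs with h2
    · simp only [hp'.pow_dvd_sub_mul_sub_iff_or hln hdvd hndvd h2]
      rw [Finset.filter_or, Finset.card_union_of_disjoint,
        Int.card_filter_Ico_pow_dvd_sub hp.pos (Nat.sub_le n l),
        Int.card_filter_Ico_pow_dvd_sub hp.pos (Nat.sub_le n l), Nat.sub_sub_self hln, two_mul]
      refine Finset.disjoint_filter.2 fun y _ hq h1 => hndvd ?_
      have hd := dvd_sub h1 hq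
      rw [sub_sub_sub_cancel_left] at hd
      exact (pow_dvd_pow _ (by omega)).trans hd
    · simp only [hp'.pow_dvd_sub_mul_sub_iff hdvd (not_lt.1 h2)]
      rw [Int.card_filter_Ico_pow_dvd_sub hp.pos (by omega)]
      congr 1
      omega
  refine (Eq.trans (by congr!) hcard).trans ?_
  rcases Nat.even_or_odd' n with ⟨k, rfl | rfl⟩
  · rw [if_pos (even_two_mul k)]
    exact if_congr (by omega) rfl rfl
  · rw [if_neg (Nat.not_even_two_mul_add_one k), show (2 * k + 1) / 2 = (2 * k + 1 - 1) / 2 by omega]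
    exact if_congr (by omega) rfl rfl

end
end

section
/- There is an absolute constant C > 0 such that the following holds. Let p be an odd prime, n ≥ 1 an integer, and let I be a nonempty subset of (ℤ/p^nℤ)^× consisting of the reductions modulo p^n of the integers coprime to p lying in some interval of length at most p^n. Then the number of quadruples (x₁, x₂, x₃, x₄) ∈ I⁴ satisfying x₁ + x₂ ≡ x₃ + x₄ (mod p^n) and x₁^{−1} + x₂^{−1} ≡ x₃^{−1} + x₄^{−1} (mod p^n) is at most C·n·|I|². -/
open scoped BigOperators
open Filter MeasureTheory

noncomputable section

/-- A half-open interval of integers contains at most `(b - a) / m + 1` elements of a residue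
class modulo `m`. -/
lemma card_Ioc_filter_dvd_sub_le {a b m : ℤ} (hab : a ≤ b) (hm : 0 < m) (v : ℤ) :
    (((Finset.Ioc a b).filter (fun x => m ∣ x - v)).card : ℝ) ≤ ((b - a : ℤ) : ℝ) / m + 1 := by
  have hfilter : (Finset.Ioc a b).filter (fun x => m ∣ x - v) =
      (Finset.Ioc a b).filter (fun x => x ≡ v [ZMOD m]) := by
    refine Finset.filter_congr fun x _ => ?_
    rw [Int.modEq_comm, Int.modEq_iff_dvd]
  have hcard := Int.Ioc_filter_modEq_card a b hm v
  rw [hfilter]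
  have hmQ : (0 : ℚ) < m := by exact_mod_cast hm
  have hbound : (((Finset.Ioc a b).filter (fun x => x ≡ v [ZMOD m])).card : ℚ) ≤
      ((b - a : ℤ) : ℚ) / m + 1 := by
    have hnonneg : (0 : ℚ) ≤ ((b - a : ℤ) : ℚ) / m :=
      div_nonneg (by exact_mod_cast sub_nonneg.mpr hab) hmQ.le
    have hfloor_le := Int.floor_le (((b : ℚ) - v) / m)
    have hlt_floor := Int.lt_floor_add_one (((a : ℚ) - v) / m)
    have hsub : ((b : ℚ) - v) / m - ((a : ℚ) - v) / m = ((b - a : ℤ) : ℚ) / m := by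
      push_cast
      ring
    have hcardQ : (((Finset.Ioc a b).filter (fun x => x ≡ v [ZMOD m])).card : ℚ) =
        max ((⌊((b : ℚ) - v) / m⌋ : ℚ) - ⌊((a : ℚ) - v) / m⌋) 0 := by
      exact_mod_cast congrArg (Int.cast : ℤ → ℚ) hcard
    rw [hcardQ]
    exact max_le (by linarith) (by linarith)
  exact_mod_cast (Rat.cast_le (K := ℝ)).mpr hbound

/-- If `p ≥ 3`, a nonempty set of the integers prime to `p` in an interval makes up at least
a third of that interval. -/
lemma length_le_three_mul_card_filter_not_dvd {a b p : ℤ} (hp : 3 ≤ p)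
    (hne : ((Finset.Ioc a b).filter (fun x => ¬ p ∣ x)).Nonempty) :
    ((b - a : ℤ) : ℝ) ≤ 3 * (((Finset.Ioc a b).filter (fun x => ¬ p ∣ x)).card : ℝ) := by
  have hab : a ≤ b := by
    obtain ⟨x, hx⟩ := hne
    rw [Finset.mem_filter, Finset.mem_Ioc] at hx
    omega
  have hdvd := card_Ioc_filter_dvd_sub_le hab (by omega : 0 < p) 0
  simp only [sub_zero] at hdvd
  have hsplit := Finset.card_filter_add_card_filter_not (s := Finset.Ioc a b) (fun x => p ∣ x)
  have htotal : ((Finset.Ioc a b).card : ℝ) = ((b - a : ℤ) : ℝ) := by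
    exact_mod_cast Int.card_Ioc_of_le a b hab
  have hone : (1 : ℝ) ≤ (((Finset.Ioc a b).filter (fun x => ¬ p ∣ x)).card : ℝ) := by
    exact_mod_cast hne.card_pos
  have hsplitR : (((Finset.Ioc a b).filter (fun x => p ∣ x)).card : ℝ) +
      (((Finset.Ioc a b).filter (fun x => ¬ p ∣ x)).card : ℝ) = ((b - a : ℤ) : ℝ) := by
    rw [← htotal]
    exact_mod_cast hsplit
  have hdiv : ((b - a : ℤ) : ℝ) / p ≤ ((b - a : ℤ) : ℝ) / 3 := by
    have : (0 : ℝ) ≤ ((b - a : ℤ) : ℝ) := by exact_mod_cast sub_nonneg.mpr hab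
    have : (3 : ℝ) ≤ p := by exact_mod_cast hp
    gcongr
  linarith

/-- The triples `f z x y` with `x, y, z ∈ J`, `x ≡ ε z (mod d)` and `y ≡ z (mod e)`. -/
def congruentTriples (J : Finset ℤ) (f : ℤ → ℤ → ℤ → ℤ × ℤ × ℤ) (ε d e : ℤ) :
    Finset (ℤ × ℤ × ℤ) :=
  J.biUnion fun z =>
    (J.filter (fun x => d ∣ x - ε * z) ×ˢ J.filter (fun y => e ∣ y - z)).image
      fun w => f z w.1 w.2

lemma mem_congruentTriples {J : Finset ℤ} (f : ℤ → ℤ → ℤ → ℤ × ℤ × ℤ) {ε d e x y z : ℤ}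
    (hx : x ∈ J) (hy : y ∈ J) (hz : z ∈ J) (hd : d ∣ x - ε * z) (he : e ∣ y - z) :
    f z x y ∈ congruentTriples J f ε d e :=
  Finset.mem_biUnion.mpr ⟨z, hz, Finset.mem_image.mpr ⟨(x, y), by simp [*], rfl⟩⟩

lemma card_congruentTriples_le {a b d e : ℤ} {J : Finset ℤ} (hJ : J ⊆ Finset.Ioc a b)
    (hlt : a < b) (hd : 0 < d) (he : 0 < e) (hde : b - a ≤ d * e)
    (f : ℤ → ℤ → ℤ → ℤ × ℤ × ℤ) (ε : ℤ) :
    ((congruentTriples J f ε d e).card : ℝ) ≤ J.card * (4 * ((b - a : ℤ) : ℝ)) := by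
  set L : ℝ := ((b - a : ℤ) : ℝ) with hL
  have hL1 : 1 ≤ L := by
    rw [hL]
    exact_mod_cast (by omega : 1 ≤ b - a)
  have hdR : (1 : ℝ) ≤ d := by exact_mod_cast hd
  have heR : (1 : ℝ) ≤ e := by exact_mod_cast he
  have hdeR : L ≤ d * e := by
    rw [hL]
    exact_mod_cast hde
  have hcount : ∀ m : ℤ, 0 < m → ∀ v : ℤ,
      ((J.filter (fun x => m ∣ x - v)).card : ℝ) ≤ L / m + 1 := fun m hm v =>
    le_trans (by exact_mod_cast Finset.card_le_card (Finset.filter_subset_filter _ hJ))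
      (card_Ioc_filter_dvd_sub_le hlt.le hm v)
  have hprod : (L / d + 1) * (L / e + 1) ≤ 4 * L := by
    have h₁ : L / d * (L / e) ≤ L := by
      rw [div_mul_div_comm, div_le_iff₀ (by positivity)]
      gcongr
    have h₂ : L / d ≤ L := div_le_self (by linarith) hdR
    have h₃ : L / e ≤ L := div_le_self (by linarith) heR
    linarith
  have hfib : ∀ z ∈ J, ((((J.filter (fun x => d ∣ x - ε * z) ×ˢ
      J.filter (fun y => e ∣ y - z)).image fun w => f z w.1 w.2).card : ℕ) : ℝ) ≤ 4 * L := by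
    intro z _
    refine le_trans ?_ hprod
    refine le_trans (Nat.cast_le.mpr Finset.card_image_le) ?_
    rw [Finset.card_product, Nat.cast_mul]
    exact mul_le_mul (hcount d hd _) (hcount e he _) (by positivity) (by positivity)
  calc ((congruentTriples J f ε d e).card : ℝ)
      ≤ ∑ z ∈ J, ((((J.filter (fun x => d ∣ x - ε * z) ×ˢ
          J.filter (fun y => e ∣ y - z)).image fun w => f z w.1 w.2).card : ℕ) : ℝ) := by
        exact_mod_cast Finset.card_biUnion_le
    _ ≤ ∑ _z ∈ J, 4 * L := Finset.sum_le_sum hfib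
    _ = J.card * (4 * L) := by rw [Finset.sum_const, nsmul_eq_mul]

lemma exists_pow_dvd_and_pow_dvd_of_pow_dvd_mul {p : ℕ} (hp : p.Prime) {n : ℕ} {u v : ℤ}
    (h : (p : ℤ) ^ n ∣ u * v) :
    ∃ i ∈ Finset.range (n + 1), (p : ℤ) ^ i ∣ u ∧ (p : ℤ) ^ (n - i) ∣ v := by
  have hnat : p ^ n ∣ u.natAbs * v.natAbs := by
    rw [← Int.natAbs_mul, ← Int.natCast_dvd]
    exact_mod_cast h
  obtain ⟨d, e, hd, he, hde⟩ := exists_dvd_and_dvd_of_dvd_mul hnat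
  obtain ⟨i, hi, rfl⟩ := (Nat.dvd_prime_pow hp).mp ⟨e, hde⟩
  have he' : e = p ^ (n - i) := by
    rw [← Nat.sub_add_cancel hi, add_comm, pow_add] at hde
    simpa using (Nat.eq_of_mul_eq_mul_left (pow_pos hp.pos i) hde).symm
  subst he'
  refine ⟨i, Finset.mem_range.mpr (by omega), ?_, ?_⟩
  · exact_mod_cast Int.natCast_dvd.mpr hd
  · exact_mod_cast Int.natCast_dvd.mpr he

/-- If `p` is odd and `p ∤ x`, then `p` cannot divide all of `x + y`, `x - z` and `z - y`, so
`p ^ n ∣ (x + y) * (x - z) * (z - y)` is already accounted for by two of the three factors. -/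
lemma exists_pow_dvd_of_pow_dvd_mul_mul {p : ℕ} (hp : p.Prime) (hodd : Odd p) {n : ℕ}
    {x y z : ℤ} (hx : ¬ (p : ℤ) ∣ x) (h : (p : ℤ) ^ n ∣ (x + y) * (x - z) * (z - y)) :
    ∃ i ∈ Finset.range (n + 1),
      ((p : ℤ) ^ i ∣ x - z ∧ (p : ℤ) ^ (n - i) ∣ y - z) ∨
      ((p : ℤ) ^ i ∣ x + y ∧ (p : ℤ) ^ (n - i) ∣ z - x) ∨
      ((p : ℤ) ^ i ∣ x + y ∧ (p : ℤ) ^ (n - i) ∣ z - y) := by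
  have hpZ : Prime (p : ℤ) := Nat.prime_iff_prime_int.mp hp
  have cancel : ∀ u v : ℤ, ¬ (p : ℤ) ∣ u → (p : ℤ) ^ n ∣ u * v → (p : ℤ) ^ n ∣ v :=
    fun u v hu huv => hpZ.pow_dvd_of_dvd_mul_left n hu huv
  by_cases hxy : (p : ℤ) ∣ x + y
  · by_cases hxz : (p : ℤ) ∣ x - z
    · have hzy : ¬ (p : ℤ) ∣ z - y := by
        intro hzy
        have h2x : (p : ℤ) ∣ 2 * x := by
          have := dvd_add (dvd_add hxy hxz) hzy
          ring_nf at this ⊢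
          exact this
        rcases hpZ.dvd_or_dvd h2x with h2 | h2
        · have h2' : p ∣ 2 := by exact_mod_cast h2
          rw [(Nat.prime_dvd_prime_iff_eq hp Nat.prime_two).mp h2'] at hodd
          exact absurd hodd (by decide)
        · exact hx h2
      obtain ⟨i, hi, h₁, h₂⟩ := exists_pow_dvd_and_pow_dvd_of_pow_dvd_mul hp
        (cancel _ _ hzy (by rwa [mul_comm] at h))
      exact ⟨i, hi, .inr (.inl ⟨h₁, (dvd_sub_comm).mp h₂⟩)⟩
    · obtain ⟨i, hi, h₁, h₂⟩ := exists_pow_dvd_and_pow_dvd_of_pow_dvd_mul hp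
        (cancel (x - z) ((x + y) * (z - y)) hxz (by convert h using 1; ring))
      exact ⟨i, hi, .inr (.inr ⟨h₁, h₂⟩)⟩
  · obtain ⟨i, hi, h₁, h₂⟩ := exists_pow_dvd_and_pow_dvd_of_pow_dvd_mul hp
      (cancel (x + y) ((x - z) * (z - y)) hxy (by rwa [← mul_assoc]))
    exact ⟨i, hi, .inl ⟨h₁, (dvd_sub_comm).mp h₂⟩⟩

lemma card_triples_pow_dvd_le {p : ℕ} (hp : p.Prime) (hodd : Odd p) (n : ℕ) {a b : ℤ}
    (hab : a < b) (hlen : b - a ≤ (p : ℤ) ^ n) {J : Finset ℤ} (hJ : J ⊆ Finset.Ioc a b)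
    (hJp : ∀ x ∈ J, ¬ (p : ℤ) ∣ x) :
    (((J ×ˢ J ×ˢ J).filter (fun t : ℤ × ℤ × ℤ =>
        (p : ℤ) ^ n ∣ (t.1 + t.2.1) * (t.1 - t.2.2) * (t.2.2 - t.2.1))).card : ℝ) ≤
      (n + 1) * (12 * (J.card * ((b - a : ℤ) : ℝ))) := by
  set S := fun i : ℕ =>
    congruentTriples J (fun z x y => (x, y, z)) 1 ((p : ℤ) ^ i) ((p : ℤ) ^ (n - i)) ∪
    (congruentTriples J (fun z x y => (z, x, y)) (-1) ((p : ℤ) ^ i) ((p : ℤ) ^ (n - i)) ∪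
    congruentTriples J (fun z x y => (x, z, y)) (-1) ((p : ℤ) ^ i) ((p : ℤ) ^ (n - i))) with hS
  have hsub : (J ×ˢ J ×ˢ J).filter (fun t : ℤ × ℤ × ℤ =>
      (p : ℤ) ^ n ∣ (t.1 + t.2.1) * (t.1 - t.2.2) * (t.2.2 - t.2.1)) ⊆
      (Finset.range (n + 1)).biUnion S := by
    rintro ⟨x, y, z⟩ ht
    simp only [Finset.mem_filter, Finset.mem_product] at ht
    obtain ⟨⟨hx, hy, hz⟩, hdvd⟩ := ht
    obtain ⟨i, hi, h⟩ := exists_pow_dvd_of_pow_dvd_mul_mul hp hodd (hJp x hx) hdvd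
    refine Finset.mem_biUnion.mpr ⟨i, hi, ?_⟩
    simp only [hS, Finset.mem_union]
    rcases h with ⟨h₁, h₂⟩ | ⟨h₁, h₂⟩ | ⟨h₁, h₂⟩
    · exact .inl (mem_congruentTriples (fun z x y => (x, y, z)) hx hy hz (by simpa using h₁) h₂)
    · exact .inr (.inl (mem_congruentTriples (fun z x y => (z, x, y)) hy hz hx
        (by simpa [add_comm] using h₁) h₂))
    · exact .inr (.inr (mem_congruentTriples (fun z x y => (x, z, y)) hx hz hy
        (by simpa using h₁) h₂))
  have hpos : (0 : ℤ) < p := by exact_mod_cast hp.pos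
  have hScard : ∀ i ∈ Finset.range (n + 1),
      ((S i).card : ℝ) ≤ 12 * (J.card * ((b - a : ℤ) : ℝ)) := by
    intro i hi
    have hpow : b - a ≤ (p : ℤ) ^ i * (p : ℤ) ^ (n - i) := by
      rwa [← pow_add, Nat.add_sub_cancel' (Nat.lt_succ_iff.mp (Finset.mem_range.mp hi))]
    have hbound := card_congruentTriples_le hJ hab (pow_pos hpos i) (pow_pos hpos (n - i)) hpow
    refine (Nat.cast_le (α := ℝ).mpr ((Finset.card_union_le _ _).trans
      (Nat.add_le_add_left (Finset.card_union_le _ _) _))).trans ?_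
    rw [Nat.cast_add, Nat.cast_add]
    linarith [hbound (fun z x y => (x, y, z)) 1, hbound (fun z x y => (z, x, y)) (-1),
      hbound (fun z x y => (x, z, y)) (-1)]
  calc _ ≤ (((Finset.range (n + 1)).biUnion S).card : ℝ) := by
        exact_mod_cast Finset.card_le_card hsub
    _ ≤ ∑ i ∈ Finset.range (n + 1), ((S i).card : ℝ) := by
        exact_mod_cast Finset.card_biUnion_le
    _ ≤ ∑ _i ∈ Finset.range (n + 1), 12 * (J.card * ((b - a : ℤ) : ℝ)) :=
        Finset.sum_le_sum hScard
    _ = (n + 1) * (12 * (J.card * ((b - a : ℤ) : ℝ))) := by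
        rw [Finset.sum_const, Finset.card_range, nsmul_eq_mul]
        push_cast
        ring

lemma add_mul_sub_mul_sub_eq_zero {R : Type*} [CommRing R] {x₁ x₂ x₃ x₄ y₁ y₂ y₃ y₄ : R}
    (h₁ : x₁ * y₁ = 1) (h₂ : x₂ * y₂ = 1) (h₃ : x₃ * y₃ = 1) (h₄ : x₄ * y₄ = 1)
    (hx : x₁ + x₂ = x₃ + x₄) (hy : y₁ + y₂ = y₃ + y₄) :
    (x₁ + x₂) * (x₁ - x₃) * (x₃ - x₂) = 0 := by
  have key : (x₁ + x₂) * x₃ * x₄ = (x₃ + x₄) * x₁ * x₂ := by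
    linear_combination x₁ * x₂ * x₃ * x₄ * hy - x₂ * x₃ * x₄ * h₁ - x₁ * x₃ * x₄ * h₂ +
      x₁ * x₂ * x₄ * h₃ + x₁ * x₂ * x₃ * h₄
  obtain rfl : x₄ = x₁ + x₂ - x₃ := by linear_combination -hx
  linear_combination key

lemma intCast_mul_inv_eq_one {p : ℕ} (hp : p.Prime) (n : ℕ) {x : ℤ} (hx : ¬ (p : ℤ) ∣ x) :
    (x : ZMod (p ^ n)) * (x : ZMod (p ^ n))⁻¹ = 1 := by
  refine ZMod.mul_inv_of_unit _ ?_
  rw [ZMod.coe_int_isUnit_iff_isCoprime]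
  push_cast
  exact ((Nat.prime_iff_prime_int.mp hp).coprime_iff_not_dvd.mpr hx).pow_left

lemma injOn_intCast_Ioc {a b : ℤ} {m : ℕ} (h : b - a ≤ m) :
    Set.InjOn (fun x : ℤ => (x : ZMod m)) (Finset.Ioc a b) := by
  intro x hx y hy hxy
  rw [Finset.mem_coe, Finset.mem_Ioc] at hx hy
  have hdvd := (ZMod.intCast_eq_intCast_iff_dvd_sub x y m).mp hxy
  have := Int.eq_zero_of_abs_lt_dvd hdvd (by rw [abs_lt]; constructor <;> omega)
  omega

/-- The counting ingredient: for an interval `I` in `(ℤ/p^nℤ)ˣ`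
(the reductions of the integers coprime to `p` in a real interval `(A,B]` of length
at most `p^n`), the number of quadruples `(x₁,x₂,x₃,x₄) ∈ I⁴` with
`x₁+x₂ ≡ x₃+x₄` and `x₁⁻¹+x₂⁻¹ ≡ x₃⁻¹+x₄⁻¹ (mod p^n)` is `≤ C n |I|²`. -/
theorem quadruple_counting :
    ∃ C : ℝ, 0 < C ∧
      ∀ (p : ℕ) (hp : p.Prime), Odd p → ∀ n : ℕ, 1 ≤ n →
        ∀ A B : ℝ, B - A ≤ (p : ℝ) ^ n →
          ∀ I : Finset (ZMod (p ^ n)),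
            I = ((Finset.Icc (⌊A⌋ + 1) ⌊B⌋).filter (fun x : ℤ => ¬ (p : ℤ) ∣ x)).image
                  (fun x : ℤ => (x : ZMod (p ^ n))) →
            I.Nonempty →
            ((((I ×ˢ I) ×ˢ (I ×ˢ I)).filter
                (fun q : (ZMod (p ^ n) × ZMod (p ^ n)) × ZMod (p ^ n) × ZMod (p ^ n) =>
                  q.1.1 + q.1.2 = q.2.1 + q.2.2 ∧
                    q.1.1⁻¹ + q.1.2⁻¹ = q.2.1⁻¹ + q.2.2⁻¹)).card : ℝ)
              ≤ C * n * (I.card : ℝ) ^ 2 := by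
  refine ⟨72, by norm_num, ?_⟩
  intro p hp hodd n hn A B hAB I hI hIne
  rw [show Finset.Icc (⌊A⌋ + 1) ⌊B⌋ = Finset.Ioc ⌊A⌋ ⌊B⌋ by
    ext x
    simp only [Finset.mem_Icc, Finset.mem_Ioc]
    omega] at hI
  set a := ⌊A⌋
  set b := ⌊B⌋
  set J := (Finset.Ioc a b).filter (fun x : ℤ => ¬ (p : ℤ) ∣ x) with hJ
  have hJsub : J ⊆ Finset.Ioc a b := Finset.filter_subset _ _
  have hJp : ∀ x ∈ J, ¬ (p : ℤ) ∣ x := fun x hx => (Finset.mem_filter.mp hx).2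
  have hJne : J.Nonempty := by
    rw [hI] at hIne
    exact Finset.image_nonempty.mp hIne
  have hab : a < b := by
    obtain ⟨x, hx⟩ := hJne
    have := Finset.mem_Ioc.mp (hJsub hx)
    omega
  have hlen : b - a ≤ (p : ℤ) ^ n := by
    have hB : B ≤ A + ((p ^ n : ℕ) : ℤ) := by
      push_cast
      linarith
    have := Int.floor_mono hB
    rw [Int.floor_add_intCast] at this
    push_cast at this
    linarith
  have hp3 : (3 : ℤ) ≤ p := by
    have := hp.two_le
    obtain ⟨k, hk⟩ := hodd
    omega
  have hIcard : I.card = J.card := by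
    rw [hI]
    exact Finset.card_image_of_injOn
      ((injOn_intCast_Ioc (by exact_mod_cast hlen)).mono (Finset.coe_subset.mpr hJsub))
  have hlength := length_le_three_mul_card_filter_not_dvd hp3 hJne
  rw [← hJ] at hlength
  have htriples := card_triples_pow_dvd_le hp hodd n hab hlen hJsub hJp
  set T := (J ×ˢ J ×ˢ J).filter (fun t : ℤ × ℤ × ℤ =>
    (p : ℤ) ^ n ∣ (t.1 + t.2.1) * (t.1 - t.2.2) * (t.2.2 - t.2.1)) with hT
  have hquad : (((I ×ˢ I) ×ˢ (I ×ˢ I)).filter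
      (fun q : (ZMod (p ^ n) × ZMod (p ^ n)) × ZMod (p ^ n) × ZMod (p ^ n) =>
        q.1.1 + q.1.2 = q.2.1 + q.2.2 ∧
          q.1.1⁻¹ + q.1.2⁻¹ = q.2.1⁻¹ + q.2.2⁻¹)).card ≤ T.card := by
    refine (Finset.card_le_card (t := T.image fun t : ℤ × ℤ × ℤ =>
      (((t.1 : ZMod (p ^ n)), (t.2.1 : ZMod (p ^ n))), ((t.2.2 : ZMod (p ^ n)),
        (t.1 : ZMod (p ^ n)) + t.2.1 - t.2.2))) ?_).trans Finset.card_image_le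
    rintro ⟨⟨x₁, x₂⟩, x₃, x₄⟩ hq
    simp only [Finset.mem_filter, Finset.mem_product, hI, Finset.mem_image] at hq
    obtain ⟨⟨⟨⟨x, hx, rfl⟩, ⟨y, hy, rfl⟩⟩, ⟨z, hz, rfl⟩, ⟨w, hw, rfl⟩⟩, hsum, hinv⟩ := hq
    refine Finset.mem_image.mpr ⟨(x, y, z), ?_, ?_⟩
    · have hzero := add_mul_sub_mul_sub_eq_zero (intCast_mul_inv_eq_one hp n (hJp x hx))
        (intCast_mul_inv_eq_one hp n (hJp y hy)) (intCast_mul_inv_eq_one hp n (hJp z hz))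
        (intCast_mul_inv_eq_one hp n (hJp w hw)) hsum hinv
      rw [hT, Finset.mem_filter]
      refine ⟨by simp only [Finset.mem_product]; exact ⟨hx, hy, hz⟩, ?_⟩
      have := (ZMod.intCast_zmod_eq_zero_iff_dvd ((x + y) * (x - z) * (z - y)) (p ^ n)).mp
        (by push_cast; exact hzero)
      exact_mod_cast this
    · simp only [Prod.mk.injEq, true_and]
      linear_combination hsum
  have hnR : (1 : ℝ) ≤ n := by exact_mod_cast hn
  rw [hIcard]
  calc _ ≤ (T.card : ℝ) := by exact_mod_cast hquad
    _ ≤ (n + 1) * (12 * (J.card * ((b - a : ℤ) : ℝ))) := htriples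
    _ ≤ (n + n) * (12 * (J.card * (3 * J.card))) := by gcongr
    _ = 72 * n * (J.card : ℝ) ^ 2 := by ring

end
end
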